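/- arXiv:math/0304410 — 12 statements merged into one kernel-verified Lean document; each statement's English description precedes it below -/
import Mathlib

section
/- There exists a 22×22 matrix with all entries equal to 1 or -1 whose determinant equals 2^23 · 5^11. Consequently md(22) ≥ 2^23 · 5^11. -/
/-- `md n` is the maximal determinant of an `n × n` matrix all of whose
entries are `1` or `-1`. -/
noncomputable def md (n : ℕ) : ℤ :=
  sSup {d : ℤ | ∃ M : Matrix (Fin n) (Fin n) ℤ,
    (∀ i j, M i j = 1 ∨ M i j = -1) ∧ M.det = d}

/-- The explicit sign matrix. -/
def wit : Matrix (Fin 22) (Fin 22) ℤ := !![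
  1, -1, -1, -1, 1, -1, -1, -1, 1, -1, -1, -1, -1, -1, 1, -1, 1, -1, 1, 1, 1, -1;
  1, 1, -1, 1, -1, -1, 1, -1, 1, 1, -1, 1, 1, 1, 1, -1, 1, 1, 1, 1, -1, 1;
  1, -1, 1, -1, -1, -1, -1, 1, 1, 1, 1, -1, 1, 1, 1, -1, -1, -1, -1, 1, -1, -1;
  1, -1, -1, 1, 1, -1, 1, 1, 1, -1, -1, -1, 1, -1, -1, 1, -1, -1, -1, -1, -1, 1;
  1, 1, 1, 1, 1, -1, -1, 1, -1, -1, -1, 1, 1, 1, 1, -1, -1, -1, 1, -1, 1, 1;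
  1, 1, 1, -1, 1, 1, 1, -1, 1, 1, 1, -1, 1, -1, 1, 1, -1, 1, 1, 1, 1, 1;
  1, -1, 1, -1, 1, 1, 1, -1, -1, -1, -1, 1, 1, 1, -1, 1, 1, -1, -1, 1, -1, -1;
  1, 1, -1, -1, -1, 1, 1, 1, 1, 1, 1, 1, 1, -1, -1, -1, 1, -1, 1, -1, 1, -1;
  1, -1, -1, 1, -1, 1, -1, 1, -1, -1, 1, 1, 1, -1, 1, 1, -1, 1, 1, 1, -1, -1;
  1, -1, 1, 1, 1, -1, 1, 1, 1, 1, 1, 1, -1, 1, 1, 1, 1, 1, 1, -1, 1, -1;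
  1, -1, -1, -1, -1, -1, -1, -1, -1, 1, -1, -1, 1, 1, -1, 1, -1, 1, 1, -1, 1, -1;
  1, -1, -1, 1, 1, 1, -1, 1, -1, 1, 1, -1, 1, 1, -1, -1, 1, 1, -1, 1, 1, 1;
  1, 1, 1, 1, -1, 1, -1, -1, 1, -1, 1, -1, -1, 1, -1, 1, 1, -1, 1, -1, -1, 1;
  1, -1, 1, -1, -1, 1, 1, 1, -1, 1, -1, -1, -1, -1, 1, -1, 1, 1, 1, -1, -1, 1;
  1, -1, -1, -1, -1, 1, 1, -1, 1, -1, 1, 1, -1, 1, 1, -1, -1, 1, -1, -1, 1, 1;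
  1, 1, 1, 1, 1, 1, -1, -1, 1, 1, -1, 1, -1, -1, -1, -1, -1, 1, -1, -1, -1, -1;
  1, -1, 1, 1, -1, -1, 1, -1, -1, 1, 1, 1, -1, -1, -1, -1, -1, -1, 1, 1, 1, 1;
  1, 1, -1, -1, 1, -1, -1, -1, -1, 1, 1, 1, -1, -1, 1, 1, 1, -1, -1, -1, -1, 1;
  1, 1, 1, -1, -1, -1, -1, 1, 1, -1, -1, 1, -1, -1, -1, 1, 1, 1, -1, 1, 1, 1;
  1, 1, -1, 1, -1, 1, 1, 1, -1, 1, -1, -1, -1, 1, 1, 1, -1, -1, -1, 1, 1, -1;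
  1, 1, -1, -1, 1, -1, 1, 1, -1, -1, 1, -1, -1, 1, -1, -1, -1, 1, 1, 1, -1, -1;
  -1, -1, -1, -1, 1, 1, -1, 1, 1, 1, -1, 1, -1, 1, -1, 1, -1, -1, 1, 1, -1, 1]

/-- Lower triangular elimination matrix. -/
def elim : Matrix (Fin 22) (Fin 22) ℤ := !![
  1, 0, 0, 0, 0, 0, 0, 0, 0, 0, 0, 0, 0, 0, 0, 0, 0, 0, 0, 0, 0, 0;
  -1, 1, 0, 0, 0, 0, 0, 0, 0, 0, 0, 0, 0, 0, 0, 0, 0, 0, 0, 0, 0, 0;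
  -1, 0, 1, 0, 0, 0, 0, 0, 0, 0, 0, 0, 0, 0, 0, 0, 0, 0, 0, 0, 0, 0;
  -1, 0, 0, 1, 0, 0, 0, 0, 0, 0, 0, 0, 0, 0, 0, 0, 0, 0, 0, 0, 0, 0;
  1, -1, -1, 0, 1, 0, 0, 0, 0, 0, 0, 0, 0, 0, 0, 0, 0, 0, 0, 0, 0, 0;
  -1, 0, 0, 1, -1, 1, 0, 0, 0, 0, 0, 0, 0, 0, 0, 0, 0, 0, 0, 0, 0, 0;
  1, 1, -1, -2, 1, -2, 2, 0, 0, 0, 0, 0, 0, 0, 0, 0, 0, 0, 0, 0, 0, 0;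
  -1, -2, 1, 2, 0, 1, -2, 1, 0, 0, 0, 0, 0, 0, 0, 0, 0, 0, 0, 0, 0, 0;
  -1, -2, 5, 6, -8, 17, -14, -7, 4, 0, 0, 0, 0, 0, 0, 0, 0, 0, 0, 0, 0, 0;
  1, 0, -1, -2, 0, -1, 0, 1, 0, 2, 0, 0, 0, 0, 0, 0, 0, 0, 0, 0, 0, 0;
  -17, -5, 9, 26, -2, 21, -8, -14, 1, -20, 9, 0, 0, 0, 0, 0, 0, 0, 0, 0, 0, 0;
  17, 8, -6, -26, 2, -24, 11, 14, -4, 17, -12, 3, 0, 0, 0, 0, 0, 0, 0, 0, 0, 0;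
  0, -1, -1, 0, 0, -1, 0, 1, -1, 1, 1, 0, 1, 0, 0, 0, 0, 0, 0, 0, 0, 0;
  17, 17, 3, -10, 2, 33, -21, -27, 37, -8, -21, -13, -25, 16, 0, 0, 0, 0, 0, 0, 0, 0;
  5, 27, 19, -12, 20, 22, -23, -39, 7, -25, -34, 13, -30, 17, 33, 0, 0, 0, 0, 0, 0, 0;
  -490, -346, -12, 326, 290, 219, -396, -228, -86, -125, 357, -124, -235, -41, 591, 300, 0, 0, 0, 0, 0, 0;
  -280, -196, 0, 188, 170, 123, -228, -132, -56, -83, 195, -64, -139, -23, 345, 174, 6, 0, 0, 0, 0, 0;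
  -190, 96, 229, 193, -130, -121, 107, -155, -38, -179, -203, 22, 12, 58, 46, 69, -45, 229, 0, 0, 0, 0;
  -40, 26, 39, 33, -30, -11, 17, -45, -8, -39, -43, 22, -8, 8, 16, 9, -5, 39, 20, 0, 0, 0;
  15, 0, 0, -14, -5, 9, 5, -1, 3, 0, -5, 8, -10, -16, -6, -5, 10, -13, 12, 13, 0, 0;
  -5, 10, 15, 3, -15, -13, 10, -3, 14, 0, -5, -16, 5, 7, -13, 15, -10, 6, -14, -6, 15, 0;
  -5, 4, -3, 5, 5, 5, -4, -5, -4, -6, -3, 6, 3, 5, 5, -7, 4, 4, 4, -4, -3, 6]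

/-- The resulting upper triangular matrix. -/
def upp : Matrix (Fin 22) (Fin 22) ℤ := !![
  1, -1, -1, -1, 1, -1, -1, -1, 1, -1, -1, -1, -1, -1, 1, -1, 1, -1, 1, 1, 1, -1;
  0, 2, 0, 2, -2, 0, 2, 0, 0, 2, 0, 2, 2, 2, 0, 0, 0, 2, 0, 0, -2, 2;
  0, 0, 2, 0, -2, 0, 0, 2, 0, 2, 2, 0, 2, 2, 0, 0, -2, 0, -2, 0, -2, 0;
  0, 0, 0, 2, 0, 0, 2, 2, 0, 0, 0, 0, 2, 0, -2, 2, -2, 0, -2, -2, -2, 2;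
  0, 0, 0, 0, 4, 0, -2, 0, -2, -4, -2, 0, -2, -2, 0, 0, 0, -2, 2, -2, 4, 0;
  0, 0, 0, 0, 0, 2, 4, 0, 2, 2, 2, -2, 2, -2, -2, 4, -2, 2, -2, 0, -2, 2;
  0, 0, 0, 0, 0, 0, -2, -4, -6, -4, -6, 8, -2, 6, 0, -4, 8, -2, 2, 2, 0, -4;
  0, 0, 0, 0, 0, 0, 0, 8, 4, 2, 6, -6, 2, -6, -2, 2, -8, -2, -2, -6, 2, 2;
  0, 0, 0, 0, 0, 0, 0, 0, 36, 26, 38, -54, 2, -38, 30, 26, -48, 38, 6, 18, 2, 26;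
  0, 0, 0, 0, 0, 0, 0, 0, 0, 2, 2, 6, -6, 2, 2, -2, 8, 2, 6, -2, 6, -6;
  0, 0, 0, 0, 0, 0, 0, 0, 0, 0, -6, -96, 74, -34, -26, 58, -128, 12, -54, 2, -46, 80;
  0, 0, 0, 0, 0, 0, 0, 0, 0, 0, 0, 96, -68, 46, 20, -76, 140, -24, 36, 10, 34, -74;
  0, 0, 0, 0, 0, 0, 0, 0, 0, 0, 0, 0, -4, 2, -6, 2, 4, -2, 2, -8, 4, -2;
  0, 0, 0, 0, 0, 0, 0, 0, 0, 0, 0, 0, 0, -132, 234, -30, -88, 122, 82, 146, -34, 40;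
  0, 0, 0, 0, 0, 0, 0, 0, 0, 0, 0, 0, 0, 0, 250, -190, -110, 120, -60, 140, -10, 180;
  0, 0, 0, 0, 0, 0, 0, 0, 0, 0, 0, 0, 0, 0, 0, 120, -3970, 1490, -1370, -2470, 980, 1360;
  0, 0, 0, 0, 0, 0, 0, 0, 0, 0, 0, 0, 0, 0, 0, 0, -2290, 830, -830, -1390, 560, 820;
  0, 0, 0, 0, 0, 0, 0, 0, 0, 0, 0, 0, 0, 0, 0, 0, 0, -500, -1790, 120, -1910, 720;
  0, 0, 0, 0, 0, 0, 0, 0, 0, 0, 0, 0, 0, 0, 0, 0, 0, 0, -390, 120, -310, 220;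
  0, 0, 0, 0, 0, 0, 0, 0, 0, 0, 0, 0, 0, 0, 0, 0, 0, 0, 0, 150, 100, -50;
  0, 0, 0, 0, 0, 0, 0, 0, 0, 0, 0, 0, 0, 0, 0, 0, 0, 0, 0, 0, -200, -100;
  0, 0, 0, 0, 0, 0, 0, 0, 0, 0, 0, 0, 0, 0, 0, 0, 0, 0, 0, 0, 0, 100]

set_option maxRecDepth 100000
set_option synthInstance.maxHeartbeats 400000
set_option synthInstance.maxSize 4000

theorem all_of_list (p : Fin 22 → Fin 22 → Bool)
    (h : ((List.finRange 22).all fun i => (List.finRange 22).all fun j => p i j) = true) :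
    ∀ i j, p i j = true := by
  simpa using h

theorem wit_entries : ∀ i j, wit i j = 1 ∨ wit i j = -1 := by
  intro i j
  have := all_of_list (fun i j => decide (wit i j = 1 ∨ wit i j = -1)) (by decide +kernel) i j
  exact of_decide_eq_true this

theorem elim_mul_wit : ∀ i j, (List.finRange 22).foldr (fun k s => elim i k * wit k j + s) 0 = upp i j := by
  intro i j
  have := all_of_list (fun i j => decide ((List.finRange 22).foldr (fun k s => elim i k * wit k j + s) 0 = upp i j)) (by decide +kernel) i j
  exact of_decide_eq_true this

theorem elim_lower : ∀ i j : Fin 22, i < j → elim i j = 0 := by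
  intro i j h
  have := all_of_list (fun i j => decide (¬ i < j ∨ elim i j = 0)) (by decide +kernel) i j
  exact (of_decide_eq_true this).resolve_left (fun g => g h)

theorem upp_upper : ∀ i j : Fin 22, j < i → upp i j = 0 := by
  intro i j h
  have := all_of_list (fun i j => decide (¬ j < i ∨ upp i j = 0)) (by decide +kernel) i j
  exact (of_decide_eq_true this).resolve_left (fun g => g h)

theorem diag_prod : (List.ofFn fun i : Fin 22 => upp i i).prod =
    (List.ofFn fun i : Fin 22 => elim i i).prod * (2^23 * 5^11) := by
  decide +kernel

theorem elim_ne : (List.ofFn fun i : Fin 22 => elim i i).prod ≠ 0 := by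
  decide +kernel

theorem wit_det : wit.det = 2^23 * 5^11 := by
  have hmul : elim * wit = upp := by
    ext i j
    rw [← elim_mul_wit, Matrix.mul_apply, ← List.sum_ofFn, List.ofFn_eq_map, List.sum, List.foldr_map]
  have hE : elim.det = (List.ofFn fun i : Fin 22 => elim i i).prod := by
    rw [List.prod_ofFn]
    exact Matrix.det_of_isLowerTriangular elim (fun i j h => elim_lower i j h)
  have hU : upp.det = (List.ofFn fun i : Fin 22 => upp i i).prod := by
    rw [List.prod_ofFn]
    exact Matrix.det_of_isUpperTriangular (fun i j h => upp_upper i j h)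
  have h := congrArg Matrix.det hmul
  rw [Matrix.det_mul, hE, hU, diag_prod] at h
  exact mul_left_cancel₀ elim_ne h

theorem stmt_0 :
    (∃ M : Matrix (Fin 22) (Fin 22) ℤ,
      (∀ i j, M i j = 1 ∨ M i j = -1) ∧ M.det = 2^23 * 5^11) ∧
    (2^23 * 5^11 : ℤ) ≤ md 22 := by
  refine ⟨⟨wit, wit_entries, wit_det⟩, ?_⟩
  refine le_csSup ⟨Nat.factorial 22, ?_⟩ ⟨wit, wit_entries, wit_det⟩
  rintro d ⟨M, hM, rfl⟩
  have h := Matrix.det_le (A := M) (abv := AbsoluteValue.abs) (x := (1 : ℤ)) (by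
    intro i j
    rcases hM i j with h | h <;> simp [h])
  simp only [Fintype.card_fin, one_pow, AbsoluteValue.abs_apply, nsmul_eq_mul, mul_one] at h
  exact (le_abs_self _).trans h
end

section
/- There exists a 23×23 matrix with all entries equal to 1 or -1 whose determinant equals 2^22 · 3 · 5^6 · 67 · 211. Consequently md(23) ≥ 2^22 · 3 · 5^6 · 67 · 211. -/
/-- Row `i` of the matrix as a bit pattern (bit `j` set means entry `1`, unset means `-1`). -/
def rowBits : List ℕ :=
  [129052, 4623113, 1048544, 1906193, 2778373, 1360852, 2721452, 4408696, 2236306, 4470566, 1584970, 8172952, 8071988, 7757388, 1759039, 2598751, 5066655, 6935362, 5498498, 3525922, 2036110, 3039802, 5147734]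

/-- The matrix of large determinant. -/
def bigM : Matrix (Fin 23) (Fin 23) ℤ :=
  fun i j => if (rowBits.getD i.val 0).testBit j.val then 1 else -1

/-- Columns of an upper triangular matrix `bigV` such that `bigM * bigV` is lower triangular. -/
def colsV : List (List ℤ) :=
  [[1],
   [-1, 1],
   [1, 0, 1],
   [-1, 1, -1, 1],
   [-1, 1, -2, 1, 1],
   [2, -2, 1, 1, 1, 3],
   [2, -2, 1, 1, 1, 2, 1],
   [-2, 2, -1, -1, -1, -2, -2, 1],
   [-2, 2, -1, -1, 2, 1, -5, 1, 3],
   [-6, 6, 5, -3, -2, 3, 1, -13, 1, 8],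
   [-14, 14, 4, 16, -20, -39, 33, -15, -13, 11, 23],
   [98, -14, 116, 44, 92, 45, 33, -15, 43, 67, 79, 84],
   [70, -10, 74, 58, 48, 10, 28, 7, 44, 39, 52, 29, 31],
   [-518, 74, -554, -434, -344, -66, -216, -51, -328, -283, -388, -213, -243, 12],
   [222, 74, 86, 231, 201, 59, -76, 54, 97, 267, 117, -3, 7, 107, 185],
   [6, 2, 154, -185, 45, -5, 176, -170, 29, -217, 201, 145, -13, -129, -239, 244],
   [294, 98, -54, 1271, -531, -549, -496, 1094, 813, 919, -1095, -799, 579, 367, 753, -1420, 912],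
   [-5096, 4361, -9134, 9151, -3251, -5430, -7815, 6336, -5029, 13574, -12661, -15495, 405, 9945, 10215, -8865, 3060, 7791],
   [-208, 178, -289, 113, 44, -54, -285, 57, -314, 289, -143, -270, -210, 270, 315, -90, -45, 207, 111],
   [-208, 178, 47, -247, 68, 18, -45, -255, -98, -287, 217, 210, -210, -210, -45, 270, -45, 15, 183, 120],
   [82, -52, 30, 23, -75, -11, 10, 59, 105, 0, 7, 0, 70, 0, -25, -25, 80, -36, -71, -85, 70],
   [1148, -728, 75, 345, -728, 76, 71, 665, 1148, 345, 75, 0, 750, 230, -5, -350, 775, -665, -879, -1144, 750, 230],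
   [-8651, 5486, 5486, -8651, 5486, -3670, 3566, -6015, -8651, -8651, 5486, 4015, -5365, -6035, -6415, 8660, -5410, 6015, 3670, 10571, -5365, -6035, 4015]]

def bigV : Matrix (Fin 23) (Fin 23) ℤ :=
  fun i j => (colsV.getD j.val []).getD i.val 0

theorem bigM_entries : ∀ i j, bigM i j = 1 ∨ bigM i j = -1 := by
  intro i j
  unfold bigM
  split_ifs <;> simp

theorem bigV_upper : ∀ i j : Fin 23, j < i → bigV i j = 0 := by
  have h : ((List.finRange 23).all fun i => (List.finRange 23).all fun j =>
      !decide (j < i) || decide (bigV i j = 0)) = true := by decide +kernel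
  intro i j hij
  have h1 := List.all_eq_true.mp (List.all_eq_true.mp h i (List.mem_finRange i)) j
    (List.mem_finRange j)
  simpa [hij] using h1

/-- `bigM * bigV`, written as a list sum. -/
def bigL : Matrix (Fin 23) (Fin 23) ℤ :=
  fun i j => ((List.finRange 23).map fun k => bigM i k * bigV k j).sum

theorem bigL_eq : bigM * bigV = bigL := by
  ext i j
  rw [Matrix.mul_apply, bigL, ← List.ofFn_eq_map, List.sum_ofFn]

theorem bigL_lower : ∀ i j : Fin 23, i < j → bigL i j = 0 := by
  have h : ((List.finRange 23).all fun i => (List.finRange 23).all fun j =>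
      !decide (i < j) || decide (bigL i j = 0)) = true := by decide +kernel
  intro i j hij
  have h1 := List.all_eq_true.mp (List.all_eq_true.mp h i (List.mem_finRange i)) j
    (List.mem_finRange j)
  simpa [hij] using h1

theorem bigDiag :
    ((List.finRange 23).map fun k => bigL k k).prod
        = (2^22 * 3 * 5^6 * 67 * 211) * ((List.finRange 23).map fun k => bigV k k).prod
      ∧ ((List.finRange 23).map fun k => bigV k k).prod ≠ 0 := by
  decide +kernel

theorem bigM_det : bigM.det = 2^22 * 3 * 5^6 * 67 * 211 := by
  have hV : bigV.det = ((List.finRange 23).map fun k => bigV k k).prod := by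
    rw [Matrix.det_of_isUpperTriangular (fun i j h => bigV_upper i j h), ← List.ofFn_eq_map,
      List.prod_ofFn]
  have hL : bigL.det = ((List.finRange 23).map fun k => bigL k k).prod := by
    rw [Matrix.det_of_isLowerTriangular bigL (fun i j h => bigL_lower i j h), ← List.ofFn_eq_map,
      List.prod_ofFn]
  have h := Matrix.det_mul bigM bigV
  rw [bigL_eq, hL, hV, bigDiag.1] at h
  exact (mul_right_cancel₀ bigDiag.2 h).symm

theorem stmt_1 :
    (∃ M : Matrix (Fin 23) (Fin 23) ℤ,
      (∀ i j, M i j = 1 ∨ M i j = -1) ∧ M.det = 2^22 * 3 * 5^6 * 67 * 211) ∧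
    (2^22 * 3 * 5^6 * 67 * 211 : ℤ) ≤ md 23 := by
  refine ⟨⟨bigM, bigM_entries, bigM_det⟩, ?_⟩
  unfold md
  refine le_csSup ?_ ⟨bigM, bigM_entries, bigM_det⟩
  refine ⟨Nat.factorial (Fintype.card (Fin 23)) • (1 : ℤ) ^ Fintype.card (Fin 23), ?_⟩
  rintro d ⟨M, hM, rfl⟩
  have h := Matrix.det_le (A := M) (abv := AbsoluteValue.abs) (x := (1 : ℤ)) (by
    intro i j
    rcases hM i j with h | h <;> simp [h])
  exact (le_abs_self _).trans h
end

section
/- There exists a 29×29 matrix with all entries equal to 1 or -1 whose determinant equals 2^28 · 7^12 · 320. Consequently md(29) ≥ 2^28 · 7^12 · 320. -/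
/-- Row bit masks of the sign matrix (bit `j` set means that entry `j` is `1`). -/
def signRows : List ℕ := [
  7469284,
  478134294,
  470694133,
  3,
  371299952,
  43819840,
  54940960,
  27987584,
  306736668,
  417507109,
  420531120,
  256017100,
  153432860,
  444816198,
  252292390,
  76717340,
  361035398,
  214001104,
  357896005,
  238573445,
  214817321,
  341521322,
  409771466,
  371714441,
  445973676,
  421262409,
  204893802,
  363348332,
  1034239]

/-- Rows of the triangular multiplier, in base `2000` with digits shifted by `1000`. -/
def mulRows : List ℕ := [
  266692169007308857671531103217294101804552061504921391126529027585791871936032015992004005999001,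
  266692169074416229187688858681570121921651440892403757066245122561281152064096047992004002003000,
  264798491148620046861686801447832148566409248783638106155009030659327615808032015976012006001000,
  266679284233193232755522012177746320085290483955851440101372923389695359936032015992012002001000,
  266424404642733272194034435104425858143420448784769241069569021438720384192032016024004002001000,
  265872769908358337170950321108144057668405591323713761200129012226304383936032048008004002001000,
  265872769905139392712804406401683474161143938957123309451267085822720383936096016008004002001000,
  265885654682472468814411858975425572707822763526333009913852926463232896448032016008004002001000,
  265874380456806527715879425136962873915673051413421789190147073536768640064032016008004002001000,
  265887265358694527715535483843377358876242116069891870865409015299840128064032016008004002001000,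
  265887265355472597499624031269681447368980463698026639263747088896256128064032016008004002001000,
  271265101287285837323976055959523200250349585183858020345863168512256128064032016008004002001000,
  271265101220178466596867537886564782617060409755705110734849024512256128064032016008004002001000,
  271265101284065399986259489732365986746921156068008570882049024512256128064032016008004002001000,
  265872769905139392318107814959009512667415412559634436098049024512256128064032016008004002001000,
  265885654679253524355922007113069747147699946242056196098049024512256128064032016008004002001000,
  265885654679252031476695296885912799394076000272392196098049024512256128064032016008004002001000,
  266692169071195791455619642305232353557282848784392196098049024512256128064032016008004002001000,
  266692169074414735914453439598771947307073568784392196098049024512256128064032016008004002001000,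
  266679284169307792244668892172606242947137568784392196098049024512256128064032016008004002001000,
  271265101284063907501729375106629894275137568784392196098049024512256128064032016008004002001000,
  271252216449284771502417257693708550275137568784392196098049024512256128064032016008004002001000,
  271265101223398903934240162841100550275137568784392196098049024512256128064032016008004002001000,
  271253826997729977077598258201100550275137568784392196098049024512256128064032016008004002001000,
  271253826994511032619108402201100550275137568784392196098049024512256128064032016008004002001000,
  271266711835731042504804402201100550275137568784392196098049024512256128064032016008004002001000,
  271790966409544081608804402201100550275137568784392196098049024512256128064032016008004002001000,
  271803851244323217608804402201100550275137568784392196098049024512256128064032016008004002001000,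
  271790966342435217608804402201100550275137568784392196098049024512256128064032016008004002001000]

/-- The record sign matrix. -/
def sgnM : Matrix (Fin 29) (Fin 29) ℤ := fun i j =>
  if (signRows.getD i.val 0).testBit j.val then 1 else -1

/-- Integer upper triangular multiplier. -/
def mulEntry (i j : Fin 29) : ℤ :=
  ((mulRows.getD i.val 0 / 2000 ^ j.val % 2000 : ℕ) : ℤ) - 1000

/-- The multiplier as a matrix. -/
def mulT : Matrix (Fin 29) (Fin 29) ℤ := fun i j => mulEntry i j

/-- Entry of the product `sgnM * mulT`, computed with a list fold. -/
def prodEntry (i j : Fin 29) : ℤ :=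
  Fin.foldr 29 (fun k s => sgnM i k * mulT k j + s) 0

theorem mulT_upper : ∀ i j : Fin 29, j < i → mulEntry i j = 0 := by
  decide +kernel

theorem prod_lower : ∀ i j : Fin 29, i < j → prodEntry i j = 0 := by
  decide +kernel

theorem diag_rel :
    Fin.foldr 29 (fun k s => prodEntry k k * s) 1 =
      2 ^ 28 * 7 ^ 12 * 320 * Fin.foldr 29 (fun k s => mulT k k * s) 1 ∧
    Fin.foldr 29 (fun k s => mulT k k * s) 1 ≠ 0 := by
  decide +kernel

theorem foldr_prod (n : ℕ) (f : Fin n → ℤ) :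
    Fin.foldr n (fun k s => f k * s) 1 = ∏ k, f k := by
  induction n with
  | zero => simp
  | succ n ih => rw [Fin.foldr_succ, Fin.prod_univ_succ, ih]

theorem foldr_sum (n : ℕ) (f : Fin n → ℤ) :
    Fin.foldr n (fun k s => f k + s) 0 = ∑ k, f k := by
  induction n with
  | zero => simp
  | succ n ih => rw [Fin.foldr_succ, Fin.sum_univ_succ, ih]

theorem prodEntry_eq (i j : Fin 29) : (sgnM * mulT) i j = prodEntry i j := by
  rw [Matrix.mul_apply]
  exact (foldr_sum 29 fun k => sgnM i k * mulT k j).symm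

theorem sgnM_det : sgnM.det = 2 ^ 28 * 7 ^ 12 * 320 := by
  have hT : mulT.det = ∏ k, mulT k k :=
    Matrix.det_of_isUpperTriangular (fun i j h => mulT_upper i j h)
  have hL : (sgnM * mulT).det = ∏ k, prodEntry k k := by
    rw [Matrix.det_of_isLowerTriangular (sgnM * mulT)
      (fun i j h => by rw [prodEntry_eq]; exact prod_lower i j h)]
    exact Finset.prod_congr rfl fun k _ => prodEntry_eq k k
  obtain ⟨h1, h2⟩ := diag_rel
  rw [foldr_prod, foldr_prod] at h1
  rw [foldr_prod] at h2
  rw [Matrix.det_mul, hT, h1] at hL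
  exact mul_right_cancel₀ h2 hL

theorem sgnM_sign (i j : Fin 29) : sgnM i j = 1 ∨ sgnM i j = -1 := by
  unfold sgnM
  split_ifs <;> simp

theorem stmt_3 :
    (∃ M : Matrix (Fin 29) (Fin 29) ℤ,
      (∀ i j, M i j = 1 ∨ M i j = -1) ∧ M.det = 2^28 * 7^12 * 320) ∧
    (2^28 * 7^12 * 320 : ℤ) ≤ md 29 := by
  refine ⟨⟨sgnM, sgnM_sign, sgnM_det⟩, ?_⟩
  refine le_csSup ?_ ⟨sgnM, sgnM_sign, sgnM_det⟩
  refine ⟨(Nat.factorial 29 : ℤ), ?_⟩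
  rintro d ⟨M, hM, rfl⟩
  have h := Matrix.det_le (A := M) (abv := AbsoluteValue.abs) (x := 1) (fun i j => by
    rcases hM i j with h | h <;> simp [h])
  simp only [Fintype.card_fin, one_pow, nsmul_eq_mul, mul_one, AbsoluteValue.abs_apply] at h
  exact (le_abs_self _).trans h
end

section
/- There exists a 31×31 matrix with all entries equal to 1 or -1 whose determinant equals 2^30 · 7^12 · 5324. Consequently md(31) ≥ 2^30 · 7^12 · 5324. -/
/-- Rows of the record matrix, each coded in binary. -/
def rowCodes : List ℕ :=
  [125515040, 2115838054, 947010635, 196365676, 1145436521, 451715466, 578208055, 311344677, 697954361, 1799919045, 1473269775, 903792832, 490794166, 770021894, 845764780, 1090333845, 780364165, 1547344156, 2095597345, 923602203, 1247530506, 506844305, 1227774115, 605845390, 1898439692, 1858475192, 1888591266, 2147483119, 78349551, 1731242665, 425132973]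

def entM (i j : Fin 31) : ℤ :=
  if (rowCodes.getD i.val 0).testBit j.val then 1 else -1

/-- The record matrix. -/
def recM : Matrix (Fin 31) (Fin 31) ℤ := fun i j => entM i j

/-- Columns of an upper triangular matrix `A`. -/
def colsA : List (List ℤ) :=
  [[1],
  [-1, 1],
  [0, -1, 1],
  [-1, 0, 0, 1],
  [-2, 1, -1, 1, 1],
  [-1, 1, -1, 1, 1, 1],
  [-1, 0, -1, 0, 1, 0, 1],
  [2, -1, 2, -1, -3, -1, -1, 1],
  [2, -1, 2, -5, -3, -5, 3, 1, 4],
  [-4, 7, -4, 5, 1, 5, -1, -7, 2, 10],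
  [4, 7, -3, 2, -1, 16, 1, 14, -2, -3, 7],
  [-5, -6, 1, -8, 4, -9, -4, -1, -3, -10, -6, 11],
  [-3, 4, 3, 0, 2, 5, -2, 7, -1, -6, 0, 5, 6],
  [-31, -36, 47, -16, 50, -87, -2, -53, 27, -14, -24, 25, 6, 48],
  [-19, -52, 55, -36, 40, -145, 10, -83, 39, 12, 4, -9, -30, 108, 58],
  [-28, 251, -216, 78, -225, 328, 89, 83, -126, 140, 185, -188, 65, -234, 68, 166],
  [656, 487, -466, 215, -976, 365, -283, 218, -412, 84, 952, -281, -802, -645, 209, 436, 841],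
  [1646, 1312, -832, 874, -2772, 697, -715, 559, -1132, 130, 2786, -925, -2247, -1548, 788, 1476, 2627, 358],
  [-1493, 695, 2965, 2411, -432, -1948, 607, 611, -767, -1336, 2866, -2198, 1284, 1197, 2317, 2106, 2737, 2810, 1926],
  [58, 1965, 780, 424, -478, -1167, 128, -856, 802, -134, 1649, 553, 116, 168, 2198, 729, 1358, 480, 174, 2135],
  [1317, 4243, 1219, 117, -2768, 270, -335, 1401, 3179, 2336, 1164, 3064, 568, 787, 2463, 2216, 1627, -998, -1214, 3330, 4132],
  [-30551, 4076, 31493, -8201, 32284, -70065, 33940, -56203, -14647, -24238, 31313, -37797, 27961, 39539, 90221, -12368, 4624, 25814, 29837, 41555, -62506, 28905],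
  [-49011, -77604, 39753, 40387, 54012, -71685, 38132, -95879, -76675, -44166, 32037, -96953, -41331, 18575, 31873, -11040, 16208, 66222, 24609, -12897, -120978, 13613, 31024],
  [-71831, 37192, 86765, -21689, 85652, -156977, 98700, -138131, -15847, -62426, 74529, -74405, 77441, 97755, 222285, -31028, 17752, 68222, 61481, 123039, -149834, 67557, 12236, 23308],
  [11142, -35634, 7693, 16213, -11564, -18545, -11073, -9653, -21773, 21944, -15896, -13867, -31711, 19725, -207, -1067, -11465, 1186, 8854, -6677, -8304, 14445, -1652, -38207, 25241],
  [288, -622, -123, -697, 630, -1435, 509, -1017, -235, 1304, -1114, 823, -173, 1721, 1287, -189, -945, -924, -92, 789, -76, 1127, 90, -1149, 901, 1226],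
  [2169, 10084, 5757, 2986, 189, 3085, 6712, 1377, 1309, -7601, 8281, -1186, 4229, -1682, 5112, 5310, 6525, 5757, -793, 7419, -2675, 4708, 27, 9294, -2551, -629, 5607],
  [402, 2101, 1282, 581, 308, 446, 1573, 85, 247, -1573, 1731, -230, 1045, -154, 1388, 991, 1320, 1282, -27, 1775, -728, 1073, 171, 1966, -493, 38, 1221, 127],
  [11829, -23324, 2167, 8258, -10549, 10322, -25718, 15007, 14578, 25718, -15771, 2758, -7634, 155, -16822, -10904, 5985, 2167, 18843, -17278, 24934, -18832, 17181, -21260, 19445, -6421, -13662, 18688, 20478],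
  [1219, -1043, 0, 1160, -1232, 1043, -1232, 1304, -197, 1232, -680, 197, -1287, -107, -1608, 373, -217, -197, 176, -856, 1336, -87, 107, -1160, 856, -87, 373, 283, 134, 197],
  [-167, 145, -117, -145, 154, -145, 154, -163, -107, -154, 85, 107, 117, 145, 201, 85, -163, -107, -139, 107, -167, 201, -145, 145, -107, 201, 85, -167, -163, 107, 117]]

/-- Columns of the lower triangular matrix `B = M * A`. -/
def colsB : List (List ℤ) :=
  [[-1, -1, 1, -1, 1, -1, 1, 1, 1, 1, 1, -1, -1, -1, -1, 1, 1, -1, 1, 1, -1, 1, 1, -1, -1, -1, -1, 1, 1, 1, 1],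
  [0, 2, 0, 0, -2, 2, 0, -2, -2, -2, 0, 0, 2, 2, 0, -2, -2, 0, -2, 0, 2, -2, 0, 2, 0, 0, 2, 0, 0, -2, -2],
  [0, 0, -2, 2, 0, -2, 0, 2, 0, 2, 0, 0, 0, 0, 2, 2, 2, 2, 0, -2, -2, 0, -2, 0, 2, 0, -2, 0, 0, 0, 2],
  [0, 0, 0, 2, 0, 2, -2, -2, 0, -2, 0, 0, 0, 0, 2, -2, -2, 2, -2, 0, 2, -2, -2, 2, 2, 2, 0, 0, 0, 0, 0],
  [0, 0, 0, 0, -2, 4, -2, -6, 0, -6, -2, 0, 2, 0, 0, -4, -6, 2, -4, 2, 4, -2, -2, 2, 0, 4, 2, -2, -2, -2, -4],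
  [0, 0, 0, 0, 0, 2, 0, -4, 2, -6, -2, -2, 2, -2, 0, -4, -6, 0, -2, 2, 2, -2, 0, 0, -2, 4, 2, 0, 0, 0, -2],
  [0, 0, 0, 0, 0, 0, -2, -4, 0, -2, -4, 2, 0, -2, -2, -2, -4, 0, -2, 0, 0, 0, -2, -2, -2, 2, 0, -2, -2, -2, -4],
  [0, 0, 0, 0, 0, 0, 0, 8, -4, 10, 6, 2, -2, 4, 4, 6, 12, -2, 4, -4, -2, 2, 4, 4, 4, -6, 0, 4, 4, 4, 8],
  [0, 0, 0, 0, 0, 0, 0, 0, -20, 26, -2, 10, -10, 4, -12, 6, 20, -2, 4, -4, -10, 2, -4, 4, -4, -22, 0, 4, -4, -12, 0],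
  [0, 0, 0, 0, 0, 0, 0, 0, 0, -42, -6, -30, -10, 12, -16, -42, -40, -6, 12, 8, 30, -34, -12, 12, -12, -6, 0, -8, -12, 4, 0],
  [0, 0, 0, 0, 0, 0, 0, 0, 0, 0, -22, -12, 38, -40, 16, 0, -16, -50, 2, -8, -16, 6, 40, 2, -30, 34, 42, 50, 54, 24, 14],
  [0, 0, 0, 0, 0, 0, 0, 0, 0, 0, 0, 48, 24, 28, 24, 44, 42, 46, -30, 10, -2, 20, 16, -30, 10, -4, 8, -24, -40, -8, -34],
  [0, 0, 0, 0, 0, 0, 0, 0, 0, 0, 0, 0, 32, 4, 32, 8, 2, 10, -30, -6, -14, 4, 28, 6, -14, 20, 32, 28, 8, -4, -10],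
  [0, 0, 0, 0, 0, 0, 0, 0, 0, 0, 0, 0, 0, 116, -96, 184, 186, 338, -198, 50, -70, -44, -292, 30, 170, -188, -224, -132, -344, -196, -194],
  [0, 0, 0, 0, 0, 0, 0, 0, 0, 0, 0, 0, 0, 0, -332, 240, 346, 166, -54, -18, 2, -12, -512, 198, 426, -452, -504, -152, -484, -296, -306],
  [0, 0, 0, 0, 0, 0, 0, 0, 0, 0, 0, 0, 0, 0, 0, -1682, -1718, -1328, 698, -542, 964, 192, 722, 152, -342, 592, 1092, 606, 1436, 254, 82],
  [0, 0, 0, 0, 0, 0, 0, 0, 0, 0, 0, 0, 0, 0, 0, 0, -358, -5170, 3110, 2366, 5288, 2470, 1106, -918, 2486, -654, 3010, 2382, 6244, 1498, 2404],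
  [0, 0, 0, 0, 0, 0, 0, 0, 0, 0, 0, 0, 0, 0, 0, 0, 0, -13482, 6748, 5750, 15770, 6644, 1294, -1702, 9976, -2572, 7224, 8366, 18494, 2736, 6772],
  [0, 0, 0, 0, 0, 0, 0, 0, 0, 0, 0, 0, 0, 0, 0, 0, 0, 0, -17080, -4868, 8458, 7486, -8350, 11980, 26312, 2698, -5586, 19894, 12376, -17658, -526],
  [0, 0, 0, 0, 0, 0, 0, 0, 0, 0, 0, 0, 0, 0, 0, 0, 0, 0, 0, 6198, 11632, -1186, 230, 7760, 4838, -10398, -784, 12306, 4284, -11532, -7244],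
  [0, 0, 0, 0, 0, 0, 0, 0, 0, 0, 0, 0, 0, 0, 0, 0, 0, 0, 0, 0, 19270, -6306, 770, 19332, -13356, -31038, 15610, 28982, 3024, 3162, -1346],
  [0, 0, 0, 0, 0, 0, 0, 0, 0, 0, 0, 0, 0, 0, 0, 0, 0, 0, 0, 0, 0, 62048, 2520, 155414, 417368, -79506, -476210, 88894, -56322, -571956, -454272],
  [0, 0, 0, 0, 0, 0, 0, 0, 0, 0, 0, 0, 0, 0, 0, 0, 0, 0, 0, 0, 0, 0, -326312, -272818, 836248, 370566, -796026, -311466, 148246, -542500, -188608],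
  [0, 0, 0, 0, 0, 0, 0, 0, 0, 0, 0, 0, 0, 0, 0, 0, 0, 0, 0, 0, 0, 0, 0, 353374, 855512, -259602, -1103746, 385294, -76930, -1513764, -1172304],
  [0, 0, 0, 0, 0, 0, 0, 0, 0, 0, 0, 0, 0, 0, 0, 0, 0, 0, 0, 0, 0, 0, 0, 0, 240296, -91098, -301392, -131612, -84224, 225400, 152614],
  [0, 0, 0, 0, 0, 0, 0, 0, 0, 0, 0, 0, 0, 0, 0, 0, 0, 0, 0, 0, 0, 0, 0, 0, 0, -11214, -14168, -1964, -12908, 6048, -7826],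
  [0, 0, 0, 0, 0, 0, 0, 0, 0, 0, 0, 0, 0, 0, 0, 0, 0, 0, 0, 0, 0, 0, 0, 0, 0, 0, 12446, 93644, 91322, -60984, -48076],
  [0, 0, 0, 0, 0, 0, 0, 0, 0, 0, 0, 0, 0, 0, 0, 0, 0, 0, 0, 0, 0, 0, 0, 0, 0, 0, 0, 20478, 17710, -14630, -11704],
  [0, 0, 0, 0, 0, 0, 0, 0, 0, 0, 0, 0, 0, 0, 0, 0, 0, 0, 0, 0, 0, 0, 0, 0, 0, 0, 0, 0, -212366, 106876, 400862],
  [0, 0, 0, 0, 0, 0, 0, 0, 0, 0, 0, 0, 0, 0, 0, 0, 0, 0, 0, 0, 0, 0, 0, 0, 0, 0, 0, 0, 0, 18018, 16478],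
  [0, 0, 0, 0, 0, 0, 0, 0, 0, 0, 0, 0, 0, 0, 0, 0, 0, 0, 0, 0, 0, 0, 0, 0, 0, 0, 0, 0, 0, 0, -4312]]

def entA (i j : Fin 31) : ℤ := (colsA.getD j.val []).getD i.val 0

def matA : Matrix (Fin 31) (Fin 31) ℤ := fun i j => entA i j

def entB (i j : Fin 31) : ℤ := (colsB.getD j.val []).getD i.val 0

def matB : Matrix (Fin 31) (Fin 31) ℤ := fun i j => entB i j

theorem recM_mul : recM * matA = matB := by
  have h : ∀ i j, ∑ k, entM i k * entA k j = entB i j := by decide +kernel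
  ext i j
  rw [Matrix.mul_apply]
  exact h i j

theorem det_matA : matA.det = ∏ i, matA i i := by
  apply Matrix.det_of_isUpperTriangular
  have h : ∀ i j : Fin 31, j < i → entA i j = 0 := by decide +kernel
  intro i j hij
  exact h i j hij

theorem det_matB : matB.det = ∏ i, matB i i := by
  apply Matrix.det_of_isLowerTriangular
  have h : ∀ i j : Fin 31, i < j → entB i j = 0 := by decide +kernel
  intro i j hij
  exact h i j hij

theorem recM_det : recM.det = 2^30 * 7^12 * 5324 := by
  have h := congrArg Matrix.det recM_mul
  rw [Matrix.det_mul, det_matA, det_matB] at h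
  have hA : ∏ i, matA i i ≠ 0 := by decide +kernel
  have hB : ∏ i, matB i i = (2^30 * 7^12 * 5324) * ∏ i, matA i i := by decide +kernel
  rw [hB] at h
  exact mul_right_cancel₀ hA h

theorem recM_pm (i j : Fin 31) : recM i j = 1 ∨ recM i j = -1 := by
  unfold recM entM
  split_ifs <;> simp

theorem stmt_4 :
    (∃ M : Matrix (Fin 31) (Fin 31) ℤ,
      (∀ i j, M i j = 1 ∨ M i j = -1) ∧ M.det = 2^30 * 7^12 * 5324) ∧
    (2^30 * 7^12 * 5324 : ℤ) ≤ md 31 := by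
  have h : ∃ M : Matrix (Fin 31) (Fin 31) ℤ,
      (∀ i j, M i j = 1 ∨ M i j = -1) ∧ M.det = 2^30 * 7^12 * 5324 :=
    ⟨recM, recM_pm, recM_det⟩
  refine ⟨h, ?_⟩
  unfold md
  refine le_csSup ?_ h
  refine ⟨Nat.factorial (Fintype.card (Fin 31)) • (1 : ℤ) ^ Fintype.card (Fin 31), ?_⟩
  rintro d ⟨M, hM, rfl⟩
  have hb := Matrix.det_le (A := M) (abv := AbsoluteValue.abs) (x := (1 : ℤ)) (by
    intro i j
    rcases hM i j with h | h <;> simp [h])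
  exact le_trans (le_abs_self _) hb
end

section
/- There exists a 34×34 matrix with all entries equal to 1 or -1 whose determinant equals 2^33 · 8^16 · 28. Consequently md(34) ≥ 2^33 · 8^16 · 28. -/
/-- Row `i` of the matrix: bit `j` is set exactly when the entry `(i, j)` is `1`. -/
def wRows : List ℕ :=
  [1631318353,
   2230175059,
   165382823,
   3262571177,
   330700111,
   661400222,
   1322800444,
   2645600888,
   996234481,
   1992468962,
   3984872389,
   3674843018,
   3054718741,
   1814535722,
   5841953207,
   4295032831,
   3629005909,
   7388939118,
   6188009180,
   8080985529,
   7572102002,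
   6554334948,
   4518800840,
   4742634384,
   6085439043,
   7161886989,
   5733839387,
   5190235937,
   7875910790,
   7172711478,
   5755488365,
   4294967295,
   2963110058,
   7215943899]

/-- The `±1` matrix, with entries indexed by natural numbers. -/
def wEntry (i j : ℕ) : ℤ := if (wRows.getD i 0).testBit j then 1 else -1

/-- Rows of a lower triangular elimination matrix. -/
def lRows : List (List ℤ) :=
  [[1],
   [-1, 1],
   [0, -1, 1],
   [-1, 0, 0, 1],
   [1, 0, -1, -1, 1],
   [0, 0, 1, 1, -1, 1],
   [-1, 1, -1, -1, 1, -2, 1],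
   [1, -1, 1, 0, 0, 1, -1, 1],
   [-2, 1, -2, 0, 0, -1, 1, -2, 1],
   [10, -3, 6, 2, 2, 5, 1, 4, -3, 4],
   [-19, 9, -9, -2, -5, -8, -1, -4, 3, -7, 3],
   [31, -27, 27, -20, 15, -2, 3, 12, 17, -5, -9, 26],
   [41, -37, 35, -26, 21, -2, 3, 16, 23, -5, -13, 34, 2],
   [-34, 42, -46, 35, -16, 25, 6, -26, -12, 19, 32, -48, 4, 29],
   [-2, 1, -3, 1, -1, 0, -1, -1, -1, 0, 1, -2, 0, 1, 1],
   [136, -14, 242, -57, -6, -31, 100, 20, 4, -29, -90, 118, -58, -123, -136, 34],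
   [0, 1, 0, 1, 0, 1, 1, 0, 0, 1, 1, 0, 0, 1, 0, 0, 1],
   [68, -19, 52, 17, 24, 49, 35, -12, 52, 41, -21, 38, 28, 9, -34, 0, 27, 34],
   [-56, 25, -127, 39, -26, -31, -60, -40, -74, 13, 36, -103, 5, 83, 81, 0, -16, -28, 53],
   [0, 5, 4, -9, -22, -9, -5, -8, -12, -17, 3, 6, -20, -3, -2, 0, 15, 14, -2, 14],
   [-1496, -829, 1132, 2349, 1730, -1255, 761, -1448, -812, -459, -3231, 134, 52, -4861, -2266, 0, -583, -1818, 454, -1070, 3468],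
   [48, 237, -51, -77, 150, 205, -13, 159, -124, -13, 58, -262, 44, 63, -17, 0, -376, -201, -132, 80, -139, 305],
   [128, 97, 185, 80, 79, 190, 215, 103, 133, 108, 119, 86, 46, 168, 26, 0, 103, -1, -31, -72, -14, -7, 107],
   [-40, -40, 103, -25, 47, -71, 20, 117, 127, -57, -12, 132, -26, 25, 112, 0, 148, 103, -31, -86, -46, -85, 77, 124],
   [24, -2, -2, 2, -10, 14, 14, -13, -6, 16, 15, -9, 0, 24, 3, 0, -3, -2, 16, 10, -1, -1, -2, -12, 13],
   [-48, -10, -13, -5, 7, -41, -38, 4, 3, -31, -39, 9, -6, -51, -3, 0, 3, 11, -13, -10, 7, -2, -7, 24, -13, 6],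
   [-24, -4, 5, -5, 7, -23, -11, 13, 9, -16, -15, 12, -6, -18, 9, 0, 12, 11, -7, -10, -2, -5, 5, 21, -4, 3, 3],
   [0, -1, -2, -1, -1, 0, -2, -2, -1, 0, -1, -2, 0, -1, -1, 0, -2, 0, 1, 1, 0, 0, -1, -1, 0, 0, 0, 1],
   [0, 3, 1, 4, 0, -1, 2, 2, -2, -1, 2, 3, 0, 0, 0, 0, 3, -1, -2, 1, 3, 2, 0, -1, -1, 0, 0, -3, 2],
   [24, -28, -2, -30, -2, 26, -1, -25, 20, 21, -2, -27, 0, 21, 0, 0, -27, 6, 28, -2, -23, -19, 2, 1, 21, 3, -3, 24, -20, 6],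
   [32, -4, 14, 10, 14, 18, 32, 0, 10, 28, 14, 14, 0, 28, 25, 0, 14, 8, 29, 14, 11, 8, 11, 18, 28, 4, 21, 7, 15, 8, 25],
   [-32, 4, -28, 4, -28, -32, -32, 0, -24, -28, 0, 0, 0, -28, -25, -14, 0, -8, -29, 0, 3, -8, -25, -32, -28, -4, -21, -21, -1, -8, -25, 14],
   [8, 6, 7, 6, 7, 8, 8, 7, 6, 7, 7, 7, 7, 7, 1, 0, 7, 2, 2, 0, 1, 2, 1, 1, 0, 1, 0, 0, 2, 2, 1, 0, 7],
   [8, 6, 7, 6, 7, 8, 8, 7, 6, 7, 7, 7, 7, 7, 7, 0, 7, 8, 8, 6, 7, 8, 7, 7, 6, 7, 6, 6, 8, 8, 7, 0, 7, 6]]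

def lEntry (i j : ℕ) : ℤ := (lRows.getD i []).getD j 0

/-- Diagonal of the eliminated matrix. -/
def dDiag : List ℤ :=
  [1,
   2,
   2,
   2,
   2,
   2,
   4,
   2,
   4,
   6,
   52,
   -4,
   58,
   -68,
   4,
   544,
   -4,
   212,
   714,
   136,
   19520,
   1712,
   496,
   -416,
   -48,
   96,
   -96,
   -16,
   -16,
   400,
   224,
   448,
   -96,
   -224]

def sumTo (f : ℕ → ℤ) : ℕ → ℤ
  | 0 => 0
  | k + 1 => sumTo f k + f k

theorem sumTo_eq (f : ℕ → ℤ) (k : ℕ) : sumTo f k = ∑ i ∈ Finset.range k, f i := by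
  induction k with
  | zero => rfl
  | succ k ih => rw [Finset.sum_range_succ, ← ih, sumTo]

def prodTo (f : ℕ → ℤ) : ℕ → ℤ
  | 0 => 1
  | k + 1 => prodTo f k * f k

theorem prodTo_eq (f : ℕ → ℤ) (k : ℕ) : prodTo f k = ∏ i ∈ Finset.range k, f i := by
  induction k with
  | zero => rfl
  | succ k ih => rw [Finset.prod_range_succ, ← ih, prodTo]

def wMat : Matrix (Fin 34) (Fin 34) ℤ := fun i j => wEntry i j

def lMat : Matrix (Fin 34) (Fin 34) ℤ := fun i j => lEntry i j

theorem lMat_upper : ∀ i < 34, ∀ j < 34, i < j → lEntry i j = 0 := by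
  decide +kernel

theorem prod_lower_s6 : ∀ i < 34, ∀ j < i,
    sumTo (fun k => lEntry i k * wEntry k j) 34 = 0 := by
  decide +kernel

theorem prod_diag : ∀ i < 34,
    sumTo (fun k => lEntry i k * wEntry k i) 34 = dDiag.getD i 0 := by
  decide +kernel

theorem diag_prod_s6 : prodTo (fun i => dDiag.getD i 0) 34
    = prodTo (fun i => lEntry i i) 34 * (2^33 * 8^16 * 28) := by
  decide +kernel

theorem lDiag_ne : prodTo (fun i => lEntry i i) 34 ≠ 0 := by
  decide +kernel

theorem mul_apply' (i j : Fin 34) :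
    (lMat * wMat) i j = sumTo (fun k => lEntry i k * wEntry k j) 34 := by
  rw [Matrix.mul_apply, sumTo_eq, Finset.sum_range]
  rfl

theorem det_lMat : lMat.det = prodTo (fun i => lEntry i i) 34 := by
  rw [Matrix.det_of_isLowerTriangular, prodTo_eq, Finset.prod_range]
  · rfl
  · intro i j hij
    exact lMat_upper i i.2 j j.2 (by simpa using hij)

theorem det_lw : (lMat * wMat).det = prodTo (fun i => dDiag.getD i 0) 34 := by
  rw [Matrix.det_of_isUpperTriangular, prodTo_eq, Finset.prod_range]
  · refine Finset.prod_congr rfl fun i _ => ?_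
    rw [mul_apply', prod_diag i i.2]
  · intro i j hij
    rw [mul_apply']
    exact prod_lower_s6 i i.2 j (by simpa using hij)

theorem det_wMat : wMat.det = 2^33 * 8^16 * 28 := by
  have h := det_lw
  rw [Matrix.det_mul, det_lMat, diag_prod_s6] at h
  exact mul_left_cancel₀ lDiag_ne h

theorem wMat_entry (i j : Fin 34) : wMat i j = 1 ∨ wMat i j = -1 := by
  unfold wMat wEntry
  split
  · exact Or.inl rfl
  · exact Or.inr rfl

theorem stmt_6 :
    (∃ M : Matrix (Fin 34) (Fin 34) ℤ,
      (∀ i j, M i j = 1 ∨ M i j = -1) ∧ M.det = 2^33 * 8^16 * 28) ∧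
    (2^33 * 8^16 * 28 : ℤ) ≤ md 34 := by
  have hex : ∃ M : Matrix (Fin 34) (Fin 34) ℤ,
      (∀ i j, M i j = 1 ∨ M i j = -1) ∧ M.det = 2^33 * 8^16 * 28 :=
    ⟨wMat, wMat_entry, det_wMat⟩
  refine ⟨hex, ?_⟩
  unfold md
  refine le_csSup ?_ hex
  refine ⟨Nat.factorial (Fintype.card (Fin 34)) • (1 : ℤ) ^ Fintype.card (Fin 34), ?_⟩
  rintro d ⟨M, hM, rfl⟩
  refine le_trans (le_abs_self _) ?_
  refine Matrix.det_le (abv := AbsoluteValue.abs) (x := 1) fun i j => ?_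
  rcases hM i j with h | h <;> simp [h]
end

section
/- There exists a 53×53 matrix with all entries equal to 1 or -1 whose determinant equals 2^52 · 13^25 · 105. Consequently md(53) ≥ 2^52 · 13^25 · 105. -/
/-!
Construction: take a Williamson Hadamard matrix of order 52 that is 3-normalized, replace the three
normalizing rows by four rows and border. The resulting sign matrix `M` satisfies
`M * Mᵀ = 52 + (rank three)`, whose determinant is `(2^52 * 13^25 * 105)^2`.
-/

/-- The rows of the sign matrix; bit `j` of a row is set iff the `j`-th entry is `+1`. -/
def rowData : List ℕ :=
  [ 3729465039845246, 3359123013861343, 4216627016865967, 2205583811538929,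
    7758134824254240, 8813928367562736, 7683268480560232, 6398876500870552,
    6467401129606772, 8689791759958508, 8141876586621532, 6487444898281916,
    6962472081424130, 8970532862170050, 6324223208879138, 8060894293347298,
    7172714553616594, 4640399821540842, 6413901083691546, 6112599222893018,
    5530518181844198, 8757425532280982, 6211861789900494, 7725607045124926,
    8399298478795966, 6613903142618897, 8365963969125617, 8291084927461673,
    8486368656467689, 8004037126512005, 4819694925662917, 6176496171037005,
    5716596348530803, 8190379586474603, 8615954550187335, 6512213534886231,
    7452457066161143, 6133902972921839, 6167772476142500, 6828516760352212,
    4994754726971004, 8837453198495566, 7588569862173401, 8791087079407245,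
    7484978957621629, 5588676635852107, 8381548926293659, 7785873763476923,
    6243839092095995, 5618701395552935, 8043940259180343, 8986753621482615,
    4606776491581375]

def sgn (b : Bool) : ℤ := if b then 1 else -1

def rowNat (i : ℕ) : ℕ := rowData.getD i 0

/-- Number of set bits of `x` among the first `n` ones. -/
def bitCount (x n : ℕ) : ℕ := Nat.rec 0 (fun k c => Nat.add c (Nat.mod (Nat.shiftRight x k) 2)) n

lemma dot_eq (a b n : ℕ) :
    ∑ k ∈ Finset.range n, sgn (a.testBit k) * sgn (b.testBit k)
      = n - 2 * (bitCount (a ^^^ b) n : ℤ) := by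
  induction n with
  | zero => rfl
  | succ n ih =>
    have h : bitCount (a ^^^ b) (n + 1)
        = bitCount (a ^^^ b) n + ((a ^^^ b).testBit n).toNat := by
      rw [Nat.toNat_testBit, ← Nat.shiftRight_eq_div_pow]
      rfl
    rw [Finset.sum_range_succ, ih, h, Nat.testBit_xor]
    cases a.testBit n <;> cases b.testBit n <;> simp [sgn] <;> ring

def eZ (i : ℕ) : ℤ := if i < 4 then 1 else 0
def yZ (i : ℕ) : ℤ := if i < 4 then 0 else if i < 38 then 1 else 3

def gramZ (i j : ℕ) : ℤ :=
  (if i = j then 52 else 0) + ((2 * eZ i - 1) * (2 * eZ j - 1)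
    + 2 * eZ i * yZ j + 2 * yZ i * eZ j)

/-- Number of disagreements between two rows. -/
def disN (i j : ℕ) : ℕ :=
  bif Nat.beq i j then 0
  else bif Nat.blt i 4 then (bif Nat.blt j 4 then 26 else (bif Nat.blt j 38 then 26 else 24))
  else bif Nat.blt j 4 then (bif Nat.blt i 38 then 26 else 24) else 26

def allBelow (p : ℕ → Bool) (n : ℕ) : Bool := Nat.rec true (fun k c => bif p k then c else false) n

lemma allBelow_spec (p : ℕ → Bool) (n : ℕ) (h : allBelow p n = true) : ∀ i < n, p i = true := by
  induction n with
  | zero => intro i hi; omega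
  | succ n ih =>
    have h' : (bif p n then allBelow p n else false) = true := h
    cases hp : p n
    · simp [hp] at h'
    · rw [hp] at h'
      intro i hi
      rcases Nat.lt_succ_iff_lt_or_eq.1 hi with h1 | h1
      · exact ih h' i h1
      · rw [h1, hp]

/-- `force x g = g x`, with `x` evaluated to a numeral first (helps the kernel). -/
def force (x : ℕ) (g : ℕ → Bool) : Bool := Nat.rec (g 0) (fun k _ => g (Nat.succ k)) x

lemma force_eq (x : ℕ) (g : ℕ → Bool) : force x g = g x := by
  cases x <;> rfl

lemma dis_check : allBelow (fun i => allBelow (fun j =>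
    force (Nat.xor (rowNat i) (rowNat j)) (fun x => Nat.beq (bitCount x 53) (disN i j))) 53) 53 = true := by
  decide +kernel

lemma gram_check (i : ℕ) (hi : i < 53) (j : ℕ) (hj : j < 53) :
    (53 : ℤ) - 2 * (bitCount (rowNat i ^^^ rowNat j) 53 : ℤ) = gramZ i j := by
  have h : bitCount (rowNat i ^^^ rowNat j) 53 = disN i j := by
    have h0 := allBelow_spec _ _ (allBelow_spec _ _ dis_check i hi) j hj
    rw [force_eq] at h0
    exact Nat.eq_of_beq_eq_true h0
  rw [h]
  have hd : disN i j = if i = j then 0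
      else if i < 4 then (if j < 4 then 26 else (if j < 38 then 26 else 24))
      else if j < 4 then (if i < 38 then 26 else 24) else 26 := by
    simp only [disN, Bool.cond_eq_ite, Nat.beq_eq, Nat.blt_eq]
  rw [hd]
  unfold gramZ eZ yZ
  split_ifs <;> omega

def signM : Matrix (Fin 53) (Fin 53) ℤ :=
  fun i j => sgn ((rowNat i).testBit j)

lemma signM_entries (i j : Fin 53) : signM i j = 1 ∨ signM i j = -1 := by
  unfold signM sgn
  split <;> simp

lemma signM_gram (i j : Fin 53) : (signM * signM.transpose) i j = gramZ i j := by
  have h := dot_eq (rowNat i) (rowNat j) 53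
  rw [Finset.sum_range] at h
  rw [← gram_check i i.2 j j.2, Matrix.mul_apply]
  exact h

def leftA : Matrix (Fin 53) (Fin 3) ℚ :=
  fun i => ![2 * eZ i - 1, 2 * eZ i, 2 * yZ i]

def rightB : Matrix (Fin 3) (Fin 53) ℚ :=
  fun l j => (![2 * eZ j - 1, yZ j, eZ j] : Fin 3 → ℚ) l

lemma gram_eq : (signM * signM.transpose).map (Int.castRingHom ℚ)
    = (52 : ℚ) • (1 + leftA * ((1 / 52 : ℚ) • rightB)) := by
  ext i j
  rw [Matrix.map_apply, signM_gram]
  simp only [Matrix.smul_apply, Matrix.add_apply, Matrix.mul_apply, Fin.sum_univ_three, leftA,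
    rightB, gramZ, Matrix.one_apply, Fin.ext_iff]
  simp
  split <;> ring

lemma small_eq : (1 + ((1 / 52 : ℚ) • rightB) * leftA) =
    !![105 / 52, 8 / 52, -158 / 52; -79 / 52, 1, 338 / 52; 4 / 52, 8 / 52, 1] := by
  have h : rightB * leftA = !![53, 8, -158; -79, 0, 338; 4, 8, 0] := by
    ext i j
    rw [Matrix.mul_apply]
    fin_cases i <;> fin_cases j <;>
      simp [rightB, leftA, Fin.sum_univ_succ, eZ, yZ] <;> norm_num
  rw [Matrix.smul_mul, h]
  ext i j
  fin_cases i <;> fin_cases j <;> simp <;> norm_num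

lemma signM_det_sq : signM.det * signM.det = (2^52 * 13^25 * 105) * (2^52 * 13^25 * 105) := by
  have h : ((signM * signM.transpose).det : ℚ) = (2^52 * 13^25 * 105) * (2^52 * 13^25 * 105) := by
    have h1 := Int.cast_det (R := ℚ) (signM * signM.transpose)
    have h2 := gram_eq
    rw [Int.coe_castRingHom] at h2
    rw [h1, h2, Matrix.det_smul, Matrix.det_one_add_mul_comm, small_eq, Matrix.det_fin_three]
    simp
    norm_num
  rw [Matrix.det_mul, Matrix.det_transpose] at h
  exact_mod_cast h

lemma exists_sign : ∃ M : Matrix (Fin 53) (Fin 53) ℤ,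
      (∀ i j, M i j = 1 ∨ M i j = -1) ∧ M.det = 2^52 * 13^25 * 105 := by
  rcases mul_self_eq_mul_self_iff.1 signM_det_sq with h | h
  · exact ⟨signM, signM_entries, h⟩
  · refine ⟨-signM, fun i j => ?_, ?_⟩
    · rcases signM_entries i j with h | h <;> simp [h]
    · rw [Matrix.det_neg, h]
      simp [Odd.neg_one_pow (show Odd 53 by decide)]

theorem stmt_11 :
    (∃ M : Matrix (Fin 53) (Fin 53) ℤ,
      (∀ i j, M i j = 1 ∨ M i j = -1) ∧ M.det = 2^52 * 13^25 * 105) ∧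
    (2^52 * 13^25 * 105 : ℤ) ≤ md 53 := by
  refine ⟨exists_sign, le_csSup ?_ exists_sign⟩
  refine ⟨(Nat.factorial (Fintype.card (Fin 53))) • (1 : ℤ) ^ (Fintype.card (Fin 53)), ?_⟩
  rintro d ⟨M, hM, rfl⟩
  refine le_trans (le_abs_self _) ?_
  refine Matrix.det_le (abv := AbsoluteValue.abs) (fun i j => ?_)
  rcases hM i j with h | h <;> simp [h]
end

section
/- There exists a 63×63 matrix with all entries equal to 1 or -1 whose determinant equals 2^64 · 15^24 · 19^7. Consequently md(63) ≥ 2^64 · 15^24 · 19^7. -/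
namespace MD63

set_option linter.unusedSimpArgs false

open Matrix
open scoped Kronecker

/-- core of a skew conference matrix of order 16 -/
def S : Matrix (Fin 15) (Fin 15) ℤ :=
  !![0, 1, 1, -1, 1, -1, -1, -1, 1, 1, 1, -1, 1, -1, -1;
    -1, 0, 1, 1, -1, 1, -1, -1, -1, 1, 1, 1, -1, 1, -1;
    -1, -1, 0, 1, 1, -1, 1, -1, -1, -1, 1, 1, 1, -1, 1;
    1, -1, -1, 0, 1, 1, -1, -1, 1, -1, -1, 1, 1, 1, -1;
    -1, 1, -1, -1, 0, 1, 1, -1, -1, 1, -1, -1, 1, 1, 1;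
    1, -1, 1, -1, -1, 0, 1, -1, 1, -1, 1, -1, -1, 1, 1;
    1, 1, -1, 1, -1, -1, 0, -1, 1, 1, -1, 1, -1, -1, 1;
    1, 1, 1, 1, 1, 1, 1, 0, -1, -1, -1, -1, -1, -1, -1;
    -1, 1, 1, -1, 1, -1, -1, 1, 0, -1, -1, 1, -1, 1, 1;
    -1, -1, 1, 1, -1, 1, -1, 1, 1, 0, -1, -1, 1, -1, 1;
    -1, -1, -1, 1, 1, -1, 1, 1, 1, 1, 0, -1, -1, 1, -1;
    1, -1, -1, -1, 1, 1, -1, 1, -1, 1, 1, 0, -1, -1, 1;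
    -1, 1, -1, -1, -1, 1, 1, 1, 1, -1, 1, 1, 0, -1, -1;
    1, -1, 1, -1, -1, -1, 1, 1, -1, 1, -1, 1, 1, 0, -1;
    1, 1, -1, 1, -1, -1, -1, 1, -1, -1, 1, -1, 1, 1, 0]

/-- all-ones 4×4 -/
def J : Matrix (Fin 4) (Fin 4) ℤ := fun _ _ => 1
/-- `J - 2 I` -/
def B : Matrix (Fin 4) (Fin 4) ℤ := J - 2 • (1 : Matrix (Fin 4) (Fin 4) ℤ)
/-- normalized Hadamard matrix of order 4 without its first column -/
def K : Matrix (Fin 4) (Fin 3) ℤ := !![1, 1, 1; 1, -1, -1; -1, 1, -1; -1, -1, 1]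
/-- `2 I - J` -/
def X : Matrix (Fin 3) (Fin 3) ℤ := !![1, -1, -1; -1, 1, -1; -1, -1, 1]
/-- all-ones column -/
def o : Matrix (Fin 15) (Fin 1) ℤ := fun _ _ => 1

lemma S_skew : Sᵀ = -S := by decide +kernel
lemma S_sq : S * Sᵀ = 15 • (1 : Matrix (Fin 15) (Fin 15) ℤ) - o * oᵀ := by decide +kernel
lemma S_o : S * o = 0 := by decide +kernel
lemma o_o : oᵀ * o = 15 • (1 : Matrix (Fin 1) (Fin 1) ℤ) := by decide +kernel
lemma J_t : Jᵀ = J := by decide +kernel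
lemma B_t : Bᵀ = B := by decide +kernel
lemma J_J : J * J = 4 • J := by decide +kernel
lemma J_B : J * B = 2 • J := by decide +kernel
lemma B_J : B * J = 2 • J := by decide +kernel
lemma B_B : B * B = 4 • (1 : Matrix (Fin 4) (Fin 4) ℤ) := by decide +kernel
lemma K_K : K * Kᵀ = 4 • (1 : Matrix (Fin 4) (Fin 4) ℤ) - J := by decide +kernel
lemma K_K' : Kᵀ * K = 4 • (1 : Matrix (Fin 3) (Fin 3) ℤ) := by decide +kernel
lemma J_K : J * K = 0 := by decide +kernel
lemma K_J : Kᵀ * J = 0 := by decide +kernel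

/-- index type with 63 elements -/
abbrev Idx := (Fin 15 × Fin 4) ⊕ (Fin 1 × Fin 3)

/-- the matrix -/
def M : Matrix Idx Idx ℤ :=
  fromBlocks ((1 : Matrix (Fin 15) (Fin 15) ℤ) ⊗ₖ J + S ⊗ₖ B) (o ⊗ₖ K) (oᵀ ⊗ₖ Kᵀ)
    ((1 : Matrix (Fin 1) (Fin 1) ℤ) ⊗ₖ X)

lemma nsm (n : ℕ) (x : ℤ) : n • x = (n : ℤ) * x := nsmul_eq_mul n x

lemma kt {a b c d : Type*} (P : Matrix a b ℤ) (Q : Matrix c d ℤ) :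
    (P ⊗ₖ Q)ᵀ = Pᵀ ⊗ₖ Qᵀ := rfl

lemma M_entries : ∀ i j, M i j = 1 ∨ M i j = -1 := by
  have h11 : ∀ i a j b, M (.inl (i, a)) (.inl (j, b)) = 1 ∨ M (.inl (i, a)) (.inl (j, b)) = -1 := by
    decide +kernel
  have h12 : ∀ i a j b, M (.inl (i, a)) (.inr (j, b)) = 1 ∨ M (.inl (i, a)) (.inr (j, b)) = -1 := by
    decide +kernel
  have h21 : ∀ i a j b, M (.inr (i, a)) (.inl (j, b)) = 1 ∨ M (.inr (i, a)) (.inl (j, b)) = -1 := by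
    decide +kernel
  have h22 : ∀ i a j b, M (.inr (i, a)) (.inr (j, b)) = 1 ∨ M (.inr (i, a)) (.inr (j, b)) = -1 := by
    decide +kernel
  rintro (⟨i, a⟩ | ⟨i, a⟩) (⟨j, b⟩ | ⟨j, b⟩)
  exacts [h11 i a j b, h12 i a j b, h21 i a j b, h22 i a j b]

/-- upper left block of the Gram matrix -/
def G60 : Matrix (Fin 15 × Fin 4) (Fin 15 × Fin 4) ℤ :=
  (1 : Matrix (Fin 15) (Fin 15) ℤ) ⊗ₖ (60 • (1 : Matrix (Fin 4) (Fin 4) ℤ) + 4 • J)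
    - (o * oᵀ) ⊗ₖ J

lemma gram : M * Mᵀ = fromBlocks G60 (o ⊗ₖ (K * Xᵀ)) (oᵀ ⊗ₖ (X * Kᵀ))
    ((1 : Matrix (Fin 1) (Fin 1) ℤ) ⊗ₖ (60 • (1 : Matrix (Fin 3) (Fin 3) ℤ) + X * Xᵀ)) := by
  have hoS : oᵀ * Sᵀ = 0 := by rw [← transpose_mul, S_o, transpose_zero]
  rw [M, fromBlocks_transpose, fromBlocks_multiply]
  simp only [transpose_add, kt, transpose_one, transpose_transpose, J_t, B_t,
    Matrix.add_mul, Matrix.mul_add, ← mul_kronecker_mul, Matrix.one_mul, Matrix.mul_one,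
    J_J, J_B, B_J, B_B, K_K, K_K', J_K, K_J, S_sq, S_o, hoS, o_o]
  congr 1
  · rw [S_skew, G60]
    ext ⟨i, a⟩ ⟨j, b⟩
    simp only [kroneckerMap_apply, Matrix.sub_apply, Matrix.add_apply, Matrix.neg_apply,
      Matrix.smul_apply, Matrix.zero_apply, smul_eq_mul, nsm, Nat.cast_ofNat]
    ring
  · ext ⟨i, a⟩ ⟨j, b⟩
    simp only [kroneckerMap_apply, Matrix.sub_apply, Matrix.add_apply, Matrix.neg_apply,
      Matrix.smul_apply, Matrix.zero_apply, smul_eq_mul, nsm, Nat.cast_ofNat]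
    ring
  · ext ⟨i, a⟩ ⟨j, b⟩
    simp only [kroneckerMap_apply, Matrix.sub_apply, Matrix.add_apply, Matrix.neg_apply,
      Matrix.smul_apply, Matrix.zero_apply, smul_eq_mul, nsm, Nat.cast_ofNat]
    ring
  · ext ⟨i, a⟩ ⟨j, b⟩
    simp only [kroneckerMap_apply, Matrix.sub_apply, Matrix.add_apply, Matrix.neg_apply,
      Matrix.smul_apply, Matrix.zero_apply, smul_eq_mul, nsm, Nat.cast_ofNat]
    ring

lemma det_small : (60 • (1 : Matrix (Fin 4) (Fin 4) ℤ) + 4 • J).det = 60 ^ 3 * 76 := by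
  decide +kernel

lemma det_G60 : 76 * G60.det = 16 * (60 ^ 3 * 76) ^ 15 := by
  -- `G60 * (19 I)` style factorization, done with a rank-one update
  have h : (76 : ℤ) • G60 = ((1 : Matrix (Fin 15) (Fin 15) ℤ) ⊗ₖ
      (60 • (1 : Matrix (Fin 4) (Fin 4) ℤ) + 4 • J)) *
      ((76 : ℤ) • (1 : Matrix (Fin 15 × Fin 4) (Fin 15 × Fin 4) ℤ) - (o * oᵀ) ⊗ₖ J) := by
    rw [Matrix.mul_sub, ← mul_kronecker_mul, Matrix.add_mul, Matrix.smul_mul, Matrix.smul_mul, J_J,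
      Matrix.mul_smul, Matrix.mul_one, Matrix.one_mul, Matrix.one_mul, G60]
    ext ⟨i, a⟩ ⟨j, b⟩
    simp only [kroneckerMap_apply, Matrix.sub_apply, Matrix.add_apply, Matrix.neg_apply,
      Matrix.smul_apply, Matrix.zero_apply, smul_eq_mul, nsm, Nat.cast_ofNat]
    ring
  have h2 : ((76 : ℤ) • (1 : Matrix (Fin 15 × Fin 4) (Fin 15 × Fin 4) ℤ) - (o * oᵀ) ⊗ₖ J).det
      = 76 ^ 59 * 16 := by
    have hc : (((76 : ℤ) • (1 : Matrix (Fin 15 × Fin 4) (Fin 15 × Fin 4) ℤ)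
        - (o * oᵀ) ⊗ₖ J).map (Int.castRingHom ℚ)) = (76 : ℚ) •
        (1 + replicateCol (Fin 1) (fun _ => (-1/76 : ℚ)) * replicateRow (Fin 1) (fun _ => (1 : ℚ))) := by
      ext ⟨i, a⟩ ⟨j, b⟩
      rw [Matrix.map_apply, Matrix.sub_apply, Matrix.smul_apply, Matrix.smul_apply,
        Matrix.add_apply, Matrix.one_apply, Matrix.one_apply]
      simp only [kroneckerMap_apply, Matrix.mul_apply, o, J, transpose_apply, replicateCol_apply,
        replicateRow_apply]
      split_ifs <;> norm_num
    have := congrArg Matrix.det hc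
    rw [det_smul, det_one_add_mul_comm, det_fin_one,  ← RingHom.mapMatrix_apply,
      ← RingHom.map_det] at this
    have h3 : ((((76 : ℤ) • (1 : Matrix (Fin 15 × Fin 4) (Fin 15 × Fin 4) ℤ)
      - (o * oᵀ) ⊗ₖ J).det : ℤ) : ℚ) = ((76 ^ 59 * 16 : ℤ) : ℚ) := by
      refine this.trans ?_
      simp only [Matrix.add_apply, Matrix.mul_apply, replicateCol_apply, replicateRow_apply,
        Matrix.one_apply_eq, Finset.sum_const, Finset.card_univ, Fintype.card_prod,
        Fintype.card_fin]
      norm_num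
    exact_mod_cast h3
  have h4 := congrArg Matrix.det h
  rw [det_mul, det_smul, h2, det_kronecker, det_small, det_one] at h4
  simp at h4
  norm_num at h4 ⊢
  linarith

lemma det_gram : (M * Mᵀ).det = 60 ^ 3 * G60.det := by
  have h : fromBlocks (1 : Matrix (Fin 15 × Fin 4) (Fin 15 × Fin 4) ℤ) 0 (-(oᵀ ⊗ₖ (X * Kᵀ)))
      ((60 : ℤ) • (1 : Matrix (Fin 1 × Fin 3) (Fin 1 × Fin 3) ℤ)) * (M * Mᵀ)
      = fromBlocks G60 (o ⊗ₖ (K * Xᵀ)) 0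
        ((3600 : ℤ) • (1 : Matrix (Fin 1 × Fin 3) (Fin 1 × Fin 3) ℤ)) := by
    have e1 : X * Kᵀ * (K * Xᵀ) = 4 • (X * Xᵀ) := by decide +kernel
    have e2 : X * Kᵀ * J = 0 := by decide +kernel
    rw [gram, fromBlocks_multiply]
    congr 1
    · simp
    · simp
    · rw [G60]
      simp only [Matrix.neg_mul, Matrix.mul_sub, ← mul_kronecker_mul, Matrix.mul_add,
        Matrix.mul_smul, Matrix.smul_mul, Matrix.mul_one, Matrix.one_mul, e2]
      ext ⟨i, a⟩ ⟨j, b⟩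
      simp only [kroneckerMap_apply, Matrix.sub_apply, Matrix.add_apply, Matrix.neg_apply,
      Matrix.smul_apply, Matrix.zero_apply, smul_eq_mul, nsm, Nat.cast_ofNat]
      ring
    · simp only [Matrix.neg_mul, ← mul_kronecker_mul, Matrix.smul_mul, Matrix.one_mul, e1, o_o]
      ext ⟨i, a⟩ ⟨j, b⟩
      rw [Subsingleton.elim i 0, Subsingleton.elim j 0, ← one_kronecker_one]
      simp only [Matrix.smul_mul, Matrix.one_mul, kroneckerMap_apply, Matrix.add_apply,
        Matrix.neg_apply, Matrix.smul_apply, smul_eq_mul, nsm, Nat.cast_ofNat,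
        Matrix.one_apply_eq]
      ring
  have h4 := congrArg Matrix.det h
  rw [det_mul, det_fromBlocks_zero₁₂, det_fromBlocks_zero₂₁] at h4
  simp only [det_smul, det_one, Fintype.card_prod, Fintype.card_fin] at h4
  norm_num at h4 ⊢
  linarith

lemma det_sq : M.det ^ 2 = (2 ^ 64 * 15 ^ 24 * 19 ^ 7) ^ 2 := by
  have h := det_gram
  rw [det_mul, det_transpose] at h
  have h2 := det_G60
  norm_num at h h2 ⊢
  linarith

lemma exists_M : ∃ M : Matrix (Fin 63) (Fin 63) ℤ,
    (∀ i j, M i j = 1 ∨ M i j = -1) ∧ M.det = 2^64 * 15^24 * 19^7 := by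
  have e : Fin 63 ≃ Idx := Fintype.equivOfCardEq (by simp)
  have hd : (M.submatrix e e).det = M.det := det_submatrix_equiv_self e M
  rcases sq_eq_sq_iff_eq_or_eq_neg.mp det_sq with h | h
  · exact ⟨M.submatrix e e, fun i j => M_entries _ _, hd.trans h⟩
  · refine ⟨-(M.submatrix e e), fun i j => ?_, ?_⟩
    · rcases M_entries (e i) (e j) with h | h <;> simp [h]
    · rw [det_neg, hd, h]; norm_num

end MD63

theorem stmt_12 :
    (∃ M : Matrix (Fin 63) (Fin 63) ℤ,
      (∀ i j, M i j = 1 ∨ M i j = -1) ∧ M.det = 2^64 * 15^24 * 19^7) ∧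
    (2^64 * 15^24 * 19^7 : ℤ) ≤ md 63 := by
  refine ⟨MD63.exists_M, le_csSup ?_ MD63.exists_M⟩
  refine ⟨(Nat.factorial 63 : ℤ), ?_⟩
  rintro d ⟨M, hM, rfl⟩
  have h := Matrix.det_le (abv := AbsoluteValue.abs) (A := M) (x := (1 : ℤ)) (fun i j => by
    rcases hM i j with h | h <;> simp [h])
  have h1 : |M.det| ≤ (Nat.factorial 63 : ℤ) := by simpa using h
  exact (le_abs_self _).trans h1
end

section
/- There exists a 69×69 matrix with all entries equal to 1 or -1 whose determinant equals 2^68 · 17^33 · 155. Consequently md(69) ≥ 2^68 · 17^33 · 155. -/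
namespace MD69

/-- Rows of a Hadamard matrix of order 68; bit `k` set means entry `-1` in column `k`. -/
def hrows : List ℕ :=
  [55900219247672338291, 108950621978000125212, 269200362422124411330, 58793092653961105535,
   99302031437911284237, 169113765441062004766, 164970941481842373575, 145506902130062998410,
   139913557951691707631, 153427358618788459994, 142061162860906035121, 290367246865846979736,
   68800147516141189835, 253172524035287963245, 97376726203945480415, 283173961208612437228,
   69820115762592403339, 193663349991086229959, 172637564999832016158, 14552549555974331250,
   221297204801379451835, 117916011497359986655, 12238522965316209133, 217832611419775724276,
   119644717770255719288, 135625717617478483009, 291189041138999463901, 82965517952087796204,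
   117286326381338084619, 282018434362062271352, 78327240232120588222, 175561078718848804317,
   196734176287871335790, 125595922265459364021, 18202018757465253464, 71889592072386067758,
   250674724638460481386, 98034699723825441207, 169741888056516729561, 18287258176213351569,
   223305088710457782197, 192062715086914790951, 270887462228736015633, 59065532116543991669,
   110519490255350490695, 121847692164679541470, 15464746229501263725, 72682923301550985652,
   251069760087493892391, 25327742524540047010, 193026525495674173100, 224079727505970211499,
   285686564104813296471, 114237650475338665046, 209073361974394464297, 29775543902770346518,
   220375516165168745718, 279916009699784587142, 121132850854138800702, 109105272111340119266,
   237757122695260347507, 19539320392299651012, 199914839977679265311, 247084634594833309426,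
   258125331168953475451, 22503588301638090171, 37764544568610094331, 59112651565124501824]

/-- The four block rows replacing the last three rows of the Hadamard matrix. -/
def xrows : List ℕ :=
  [235457512961666482692, 37186803916048252992, 21925847649076248832, 577740652561841339]

def hr (i : ℕ) : ℕ := hrows.getD i 0
def xr (i : ℕ) : ℕ := xrows.getD i 0
def mr (i : ℕ) : ℕ := if i < 65 then hr i else xr (i - 65)

def sgn (a k : ℕ) : ℤ := if a.testBit k then -1 else 1

def dot : ℕ → ℕ → ℕ → ℤ
  | 0, _, _ => 0
  | k + 1, a, b => dot k a b + (if a.testBit k == b.testBit k then 1 else -1)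

def dsum : ℕ → ℕ → ℤ
  | 0, _ => 0
  | k + 1, a => dsum k a + dot 68 a (hr k)

def d4 (i j : ℕ) : ℤ := if j < 3 then (if i = 0 ∨ i = j + 1 then -34 else 34) else 310

def D4 : Matrix (Fin 4) (Fin 4) ℤ := Matrix.of fun i j => d4 i j

theorem dot_eq (n a b : ℕ) : dot n a b = ∑ k ∈ Finset.range n, sgn a k * sgn b k := by
  induction n with
  | zero => rfl
  | succ n ih =>
    rw [Finset.sum_range_succ, ← ih, dot]
    unfold sgn
    cases a.testBit n <;> cases b.testBit n <;> simp

theorem dsum_eq (n a : ℕ) : dsum n a = ∑ j ∈ Finset.range n, dot 68 a (hr j) := by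
  induction n with
  | zero => rfl
  | succ n ih => rw [Finset.sum_range_succ, ← ih, dsum]

theorem check_had : ∀ i < 68, ∀ j < 68,
    dot 68 (hr i) (hr j) = if i = j then 68 else 0 := by
  decide +kernel

theorem check_bit : ∀ i < 69, (mr i).testBit 68 = false := by
  decide +kernel

theorem check_D : ∀ i < 4, ∀ j < 4,
    (if j < 3 then dot 68 (xr i) (hr (65 + j)) else 68 - dsum 65 (xr i)) = d4 i j := by
  decide +kernel

theorem det_D4 : D4.det = -(34 ^ 3 * 310 * 16) := by
  decide +kernel

def H : Matrix (Fin 68) (Fin 68) ℤ := fun i k => sgn (hr i) k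

def M : Matrix (Fin 69) (Fin 69) ℤ := fun i k => sgn (mr i) k

def w (k : ℕ) : ℤ := -∑ j ∈ Finset.range 65, sgn (hr j) k

def T : Matrix (Fin 69) (Fin 69) ℤ := fun k j =>
  if (j : ℕ) < 68 then (if (k : ℕ) < 68 then sgn (hr j) k else 0)
  else (if (k : ℕ) < 68 then w k else 68)

theorem H_mul : H * H.transpose = (68 : ℤ) • (1 : Matrix (Fin 68) (Fin 68) ℤ) := by
  ext i j
  have h := check_had i i.2 j j.2
  rw [dot_eq, ← Fin.sum_univ_eq_sum_range (fun k => sgn (hr i) k * sgn (hr j) k)] at h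
  rw [Matrix.mul_apply]
  simp only [Matrix.transpose_apply, H, Matrix.smul_apply, Matrix.one_apply, smul_eq_mul]
  rw [h]
  by_cases hij : i = j
  · simp [hij]
  · have : (i : ℕ) ≠ j := fun h => hij (Fin.ext h)
    simp [hij, this]

theorem det_H : H.det = 68 ^ 34 ∨ H.det = -68 ^ 34 := by
  have h := congrArg Matrix.det H_mul
  rw [Matrix.det_mul, Matrix.det_transpose, Matrix.det_smul, Matrix.det_one, Fintype.card_fin] at h
  apply sq_eq_sq_iff_eq_or_eq_neg.mp
  rw [sq, h]
  norm_num

theorem det_T : T.det = H.det * 68 := by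
  have h : T.submatrix (finSumFinEquiv : Fin 68 ⊕ Fin 1 ≃ Fin 69)
      (finSumFinEquiv : Fin 68 ⊕ Fin 1 ≃ Fin 69)
      = Matrix.fromBlocks H.transpose (Matrix.of fun k _ => w k) 0 (Matrix.of fun _ _ => 68) := by
    ext i j
    rcases i with i | i <;> rcases j with j | j <;>
      simp only [Matrix.submatrix_apply, finSumFinEquiv_apply_left, finSumFinEquiv_apply_right,
        Matrix.fromBlocks_apply₁₁, Matrix.fromBlocks_apply₁₂, Matrix.fromBlocks_apply₂₁,
        Matrix.fromBlocks_apply₂₂] <;> simp [T, H]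
  rw [← Matrix.det_submatrix_equiv_self (finSumFinEquiv : Fin 68 ⊕ Fin 1 ≃ Fin 69), h,
    Matrix.det_fromBlocks_zero₂₁, Matrix.det_transpose]
  simp

theorem sgn_last (i : ℕ) (hi : i < 69) : sgn (mr i) 68 = 1 := by
  simp [sgn, check_bit i hi]

theorem MT_left (i j : Fin 69) (hj : (j : ℕ) < 68) : (M * T) i j = dot 68 (mr i) (hr j) := by
  rw [Matrix.mul_apply, Fin.sum_univ_castSucc, dot_eq,
    ← Fin.sum_univ_eq_sum_range (fun k => sgn (mr i) k * sgn (hr j) k)]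
  simp [T, M, hj]

theorem MT_right (i j : Fin 69) (hj : ¬ (j : ℕ) < 68) :
    (M * T) i j = 68 - dsum 65 (mr i) := by
  have h1 : ∑ k ∈ Finset.range 68, sgn (mr i) k * w k = - dsum 65 (mr i) := by
    simp only [w, mul_neg, Finset.sum_neg_distrib, dsum_eq, dot_eq, Finset.mul_sum]
    rw [Finset.sum_comm]
  rw [← Fin.sum_univ_eq_sum_range (fun k => sgn (mr i) k * w k)] at h1
  rw [Matrix.mul_apply, Fin.sum_univ_castSucc]
  simp only [T, M, hj, if_false, Fin.val_castSucc, Fin.is_lt, if_true, Fin.val_last, lt_irrefl,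
    h1, sgn_last i i.2]
  ring

theorem mr_lt (i : ℕ) (hi : i < 65) : mr i = hr i := by simp [mr, hi]

theorem mr_ge (i : ℕ) : mr (65 + i) = xr i := by simp [mr]

theorem dsum_h (i : ℕ) (hi : i < 65) : dsum 65 (hr i) = 68 := by
  rw [dsum_eq, Finset.sum_congr rfl (fun j hj => check_had i (by omega) j
    (by have := Finset.mem_range.mp hj; omega))]
  simp [hi]

theorem det_MT : (M * T).det = 68 ^ 65 * D4.det := by
  have h : (M * T).submatrix (finSumFinEquiv : Fin 65 ⊕ Fin 4 ≃ Fin 69)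
      (finSumFinEquiv : Fin 65 ⊕ Fin 4 ≃ Fin 69)
      = Matrix.fromBlocks ((68 : ℤ) • (1 : Matrix (Fin 65) (Fin 65) ℤ)) 0
        (Matrix.of fun (i : Fin 4) (j : Fin 65) => dot 68 (xr i) (hr j)) D4 := by
    ext i j
    rcases i with i | i <;> rcases j with j | j <;>
      simp only [Matrix.submatrix_apply, finSumFinEquiv_apply_left, finSumFinEquiv_apply_right,
        Matrix.fromBlocks_apply₁₁, Matrix.fromBlocks_apply₁₂, Matrix.fromBlocks_apply₂₁,
        Matrix.fromBlocks_apply₂₂]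
    · rw [MT_left _ _ (by simp; omega)]
      simp only [Fin.val_castAdd]
      rw [mr_lt i i.2, check_had i (by omega) j (by omega)]
      simp [Matrix.one_apply, Fin.ext_iff]
    · by_cases hj : (j : ℕ) < 3
      · rw [MT_left _ _ (by simp; omega)]
        simp only [Fin.val_castAdd, Fin.val_natAdd]
        rw [mr_lt i i.2, check_had i (by omega) (65 + j) (by omega), if_neg (by omega)]
        rfl
      · rw [MT_right _ _ (by simp; omega)]
        simp only [Fin.val_castAdd]
        rw [mr_lt i i.2, dsum_h i i.2]
        rfl
    · rw [MT_left _ _ (by simp; omega)]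
      simp only [Fin.val_castAdd, Fin.val_natAdd]
      rw [mr_ge]
      rfl
    · rw [show D4 i j = d4 i j from rfl, ← check_D i i.2 j j.2]
      by_cases hj : (j : ℕ) < 3
      · rw [MT_left _ _ (by simp; omega)]
        simp only [Fin.val_natAdd]
        rw [mr_ge, if_pos hj]
      · rw [MT_right _ _ (by simp; omega)]
        simp only [Fin.val_natAdd]
        rw [mr_ge, if_neg hj]
  rw [← Matrix.det_submatrix_equiv_self (finSumFinEquiv : Fin 65 ⊕ Fin 4 ≃ Fin 69), h,
    Matrix.det_fromBlocks_zero₁₂, Matrix.det_smul, Matrix.det_one, Fintype.card_fin, mul_one]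

theorem det_M : M.det = 2 ^ 68 * 17 ^ 33 * 155 ∨ M.det = -(2 ^ 68 * 17 ^ 33 * 155) := by
  have h := det_MT
  rw [Matrix.det_mul, det_T, det_D4] at h
  rcases det_H with h' | h' <;> rw [h'] at h <;> norm_num at h ⊢ <;> omega

theorem exists_M : ∃ M : Matrix (Fin 69) (Fin 69) ℤ,
      (∀ i j, M i j = 1 ∨ M i j = -1) ∧ M.det = 2^68 * 17^33 * 155 := by
  have hM : ∀ i j, M i j = 1 ∨ M i j = -1 := by
    intro i j
    simp only [M, sgn]
    split <;> simp
  rcases det_M with h | h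
  · exact ⟨M, hM, h⟩
  · refine ⟨M.submatrix (Equiv.swap 0 1) id, fun i j => hM _ _, ?_⟩
    rw [Matrix.det_permute, h, Equiv.Perm.sign_swap (by decide)]
    norm_num

end MD69

theorem stmt_13 :
    (∃ M : Matrix (Fin 69) (Fin 69) ℤ,
      (∀ i j, M i j = 1 ∨ M i j = -1) ∧ M.det = 2^68 * 17^33 * 155) ∧
    (2^68 * 17^33 * 155 : ℤ) ≤ md 69 := by
  refine ⟨MD69.exists_M, le_csSup ?_ MD69.exists_M⟩
  refine ⟨(Fintype.card (Fin 69)).factorial • (1 : ℤ) ^ Fintype.card (Fin 69), ?_⟩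
  rintro d ⟨M, hM, rfl⟩
  refine le_trans (le_abs_self _) ?_
  refine Matrix.det_le (abv := AbsoluteValue.abs) (x := 1) (fun i j => ?_)
  rcases hM i j with h | h <;> simp [h]
end

section
/- There exists a 73×73 matrix with all entries equal to 1 or -1 whose determinant equals 2^72 · 18^35 · 163. Consequently md(73) ≥ 2^72 · 18^35 · 163. -/
/-! A Hadamard matrix of order 72 with excess 580, bordered to a 73 × 73 sign matrix. -/

namespace HadamardSeventyTwo

/-- The bits of the Hadamard matrix, row after row. -/
def bits : ℕ := 3079419916426273843808943450525891161185003751143874673156698892035382212973465777088540727561695617483457472547158039129151832652856715410729954282209159522711647287387849360603090359986000295956821186238275331618774838442353364338982280393605568552732026574938095274953561071063124896239354866611391159542756525133031065492099429725424422999147115095722779273887289716639974770019361862042615487299934180216008734249836782565189402854761351092375474405318733392061280401379281927349051793556085948044317150133616951241104120470070862066184133136395898846880808584421540348094599450868397251373185680520578654353070847309215813678676504883548790928019144730736703764415152172073119956019948461981818195053688909421364847275531250662351518764283094777824817868225528374207354178174619866141452269162349234402684949876687397141758924542229491521524557462839128481156498534869411688613539647833586152612239253397973628568559870277526848522861946808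280104652772219779891451095868604455475034665659853241080733550512440082435784177184633919721726386931558419306753609735624708201828428146392300278266153454796093135028834661808273695679771376162412987257289210192528074420111077448187252654578283537910964067825618168039217540400991054881785663579504125740884309486679195590186324629679731652000975374397675075472883731956646596323055400954921438681454892489205610839463461977503969176127730883784014496642033791809948467476867717868539964403878233217765093244699212590039276036039199663917759856912216727945710136394167395077585985739006383241045935586224016668963

/-- The bit in row `i`, column `j`. -/
def bit (i j : ℕ) : Bool := Nat.testBit bits (72 * i + j)

/-- The number of `k < n` with `p k`. -/
def cnt (p : ℕ → Bool) (n : ℕ) : ℕ := Nat.rec 0 (fun k r => r + (p k).toNat) n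

/-- The sum of `f k` over `k < n`. -/
def tot (f : ℕ → ℕ) (n : ℕ) : ℕ := Nat.rec 0 (fun k r => r + f k) n

/-- Whether all `k < n` satisfy `p k`. -/
def allB (p : ℕ → Bool) (n : ℕ) : Bool := Nat.rec true (fun k r => (p k) && r) n

theorem allB_spec (p : ℕ → Bool) (n : ℕ) (h : allB p n = true) : ∀ k < n, p k = true := by
  induction n with
  | zero => intro k hk; omega
  | succ n ih =>
    have h' : (p n && allB p n) = true := h
    rw [Bool.and_eq_true] at h'
    intro k hk
    rcases Nat.lt_succ_iff_lt_or_eq.mp hk with hk | rfl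
    · exact ih h'.2 k hk
    · exact h'.1

theorem orth_check :
    allB (fun i => allB (fun j => Nat.beq (cnt (fun k => (bit i k) == (bit j k)) 72) 36) i) 72
      = true := by
  decide +kernel

theorem excess_check : tot (fun i => cnt (fun k => bit i k) 72) 72 = 2882 := by
  decide +kernel

/-- The entry in row `i`, column `j`. -/
def h (i j : ℕ) : ℤ := if bit i j then 1 else -1

theorem sum_h (i n : ℕ) :
    ∑ k ∈ Finset.range n, h i k = 2 * (cnt (fun k => bit i k) n : ℤ) - n := by
  induction n with
  | zero => simp [cnt]
  | succ n ih =>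
    have e : cnt (fun k => bit i k) (n + 1) = cnt (fun k => bit i k) n + (bit i n).toNat := rfl
    rw [Finset.sum_range_succ, ih, e, h]
    cases bit i n <;> simp <;> ring

theorem dot_h (i j n : ℕ) : ∑ k ∈ Finset.range n, h i k * h j k =
    2 * (cnt (fun k => (bit i k) == (bit j k)) n : ℤ) - n := by
  induction n with
  | zero => simp [cnt]
  | succ n ih =>
    have e : cnt (fun k => (bit i k) == (bit j k)) (n + 1) =
      cnt (fun k => (bit i k) == (bit j k)) n + ((bit i n) == (bit j n)).toNat := rfl
    rw [Finset.sum_range_succ, ih, e, h, h]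
    cases bit i n <;> cases bit j n <;> simp <;> ring

theorem tot_eq (f : ℕ → ℕ) (n : ℕ) : tot f n = ∑ k ∈ Finset.range n, f k := by
  induction n with
  | zero => rfl
  | succ n ih => rw [Finset.sum_range_succ, ← ih]; rfl

theorem excess : ∑ i ∈ Finset.range 72, ∑ k ∈ Finset.range 72, h i k = 580 := by
  have e := excess_check
  rw [tot_eq] at e
  have e' : ∑ i ∈ Finset.range 72, (cnt (fun k => bit i k) 72 : ℤ) = 2882 := by exact_mod_cast e
  simp only [sum_h, Finset.sum_sub_distrib, ← Finset.mul_sum, e']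
  simp

theorem orth_lt (i j : ℕ) (hi : i < 72) (hj : j < i) :
    ∑ k ∈ Finset.range 72, h i k * h j k = 0 := by
  have e := allB_spec _ _ (allB_spec _ _ orth_check i hi) j hj
  have e' := Nat.eq_of_beq_eq_true e
  rw [dot_h, e']
  norm_num

theorem orth (i j : ℕ) (hi : i < 72) (hj : j < 72) (hij : i ≠ j) :
    ∑ k ∈ Finset.range 72, h i k * h j k = 0 := by
  rcases lt_or_gt_of_ne hij with hl | hl
  · rw [← orth_lt j i hj hl]
    exact Finset.sum_congr rfl fun k _ => mul_comm _ _
  · exact orth_lt i j hi hl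

theorem h_sign (i j : ℕ) : h i j = 1 ∨ h i j = -1 := by
  unfold h; split <;> simp

theorem h_sq (i j : ℕ) : h i j * h i j = 1 := by
  rcases h_sign i j with e | e <;> rw [e] <;> norm_num

/-- The Hadamard matrix. -/
def H : Matrix (Fin 72) (Fin 72) ℤ := Matrix.of fun i j => h i j

theorem H_mul : H * H.transpose = (72 : ℤ) • (1 : Matrix (Fin 72) (Fin 72) ℤ) := by
  ext i j
  rw [Matrix.mul_apply]
  simp only [H, Matrix.transpose_apply, Matrix.of_apply, Matrix.smul_apply]
  rw [Fin.sum_univ_eq_sum_range (fun k => h i k * h j k) 72]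
  by_cases hij : i = j
  · subst hij
    simp [h_sq]
  · rw [orth i j i.2 j.2 (fun e => hij (Fin.ext e)), Matrix.one_apply_ne hij]
    simp

theorem det_H : H.det = 72 ^ 36 ∨ H.det = -72 ^ 36 := by
  have e := congrArg Matrix.det H_mul
  rw [Matrix.det_mul, Matrix.det_transpose, Matrix.det_smul, Matrix.det_one, mul_one,
    Fintype.card_fin] at e
  apply sq_eq_sq_iff_eq_or_eq_neg.mp
  rw [sq, e]
  norm_num

/-- All-ones column. -/
def u : Matrix (Fin 72) (Fin 1) ℤ := Matrix.of fun _ _ => 1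

/-- All-minus-ones row. -/
def v : Matrix (Fin 1) (Fin 72) ℤ := Matrix.of fun _ _ => -1

/-- The bordered matrix. -/
def K : Matrix (Fin 72 ⊕ Fin 1) (Fin 72 ⊕ Fin 1) ℤ := Matrix.fromBlocks H u v 1

theorem vHu : v * H.transpose * u = Matrix.of fun _ _ => -580 := by
  ext a b
  simp only [Matrix.mul_apply, v, u, H, Matrix.of_apply, Matrix.transpose_apply, mul_one]
  simp only [neg_mul, one_mul, Finset.sum_neg_distrib]
  rw [← excess, ← Fin.sum_univ_eq_sum_range]
  refine congrArg Neg.neg ?_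
  refine Finset.sum_congr rfl fun i _ => ?_
  exact Fin.sum_univ_eq_sum_range (fun k => h i k) 72

theorem det_K : 72 * K.det = H.det * 652 := by
  have e1 : K * Matrix.fromBlocks H.transpose (-(H.transpose * u)) 0 ((72 : ℤ) • 1) =
      Matrix.fromBlocks ((72 : ℤ) • 1) 0 (v * H.transpose) (Matrix.of fun _ _ => 652) := by
    rw [K, Matrix.fromBlocks_multiply]
    refine Matrix.fromBlocks_inj.mpr ⟨?_, ?_, ?_, ?_⟩
    · rw [H_mul]; simp
    · rw [Matrix.mul_neg, ← Matrix.mul_assoc, H_mul, Matrix.smul_mul, Matrix.one_mul,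
        Matrix.mul_smul, Matrix.mul_one, neg_add_cancel]
    · simp
    · rw [Matrix.mul_neg, ← Matrix.mul_assoc, vHu, Matrix.one_mul]
      ext a b
      rw [Subsingleton.elim b a]
      simp only [Matrix.add_apply, Matrix.neg_apply, Matrix.of_apply, Matrix.smul_apply,
        Matrix.one_apply_eq, smul_eq_mul]
      norm_num
  have e2 := congrArg Matrix.det e1
  rw [Matrix.det_mul, Matrix.det_fromBlocks_zero₂₁, Matrix.det_fromBlocks_zero₁₂,
    Matrix.det_transpose, ← H_mul, Matrix.det_mul, Matrix.det_transpose] at e2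
  have h0 : H.det ≠ 0 := by rcases det_H with e | e <;> rw [e] <;> norm_num
  simp only [Matrix.det_unique, Matrix.of_apply, Matrix.smul_apply, Matrix.one_apply_eq,
    smul_eq_mul, mul_one] at e2
  apply mul_left_cancel₀ h0
  linarith

theorem K_sign : ∀ i j, K i j = 1 ∨ K i j = -1 := by
  rintro (i | i) (j | j)
  · exact h_sign i j
  · exact Or.inl rfl
  · exact Or.inr rfl
  · left; simp [K, Subsingleton.elim i j]

theorem det_K' : K.det = 2^72 * 18^35 * 163 ∨ K.det = -(2^72 * 18^35 * 163) := by
  have e := det_K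
  rcases det_H with e1 | e1
  · left
    rw [e1] at e
    norm_num at e ⊢
    omega
  · right
    rw [e1] at e
    norm_num at e ⊢
    omega

theorem exists_matrix : ∃ M : Matrix (Fin 73) (Fin 73) ℤ,
    (∀ i j, M i j = 1 ∨ M i j = -1) ∧ M.det = 2^72 * 18^35 * 163 := by
  let f : Fin 72 ⊕ Fin 1 ≃ Fin 73 := finSumFinEquiv
  have hd : (Matrix.reindex f f K).det = K.det := Matrix.det_reindex_self f K
  have hs : ∀ i j, Matrix.reindex f f K i j = 1 ∨ Matrix.reindex f f K i j = -1 :=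
    fun i j => K_sign _ _
  rcases det_K' with e | e
  · exact ⟨_, hs, hd.trans e⟩
  · refine ⟨-(Matrix.reindex f f K), fun i j => ?_, ?_⟩
    · rw [Matrix.neg_apply]
      rcases hs i j with e | e <;> rw [e] <;> simp
    · rw [Matrix.det_neg, hd, e, Fintype.card_fin, Odd.neg_one_pow (by decide)]
      ring

theorem finite_dets (n : ℕ) : {d : ℤ | ∃ M : Matrix (Fin n) (Fin n) ℤ,
    (∀ i j, M i j = 1 ∨ M i j = -1) ∧ M.det = d}.Finite := by
  have hf : {M : Matrix (Fin n) (Fin n) ℤ | ∀ i j, M i j ∈ ({1, -1} : Set ℤ)}.Finite :=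
    Set.Finite.pi' fun _ => Set.Finite.pi' fun _ => Set.toFinite _
  refine (hf.image Matrix.det).subset ?_
  rintro d ⟨M, hM, rfl⟩
  exact ⟨M, fun i j => by simpa using hM i j, rfl⟩

end HadamardSeventyTwo

theorem stmt_14 :
    (∃ M : Matrix (Fin 73) (Fin 73) ℤ,
      (∀ i j, M i j = 1 ∨ M i j = -1) ∧ M.det = 2^72 * 18^35 * 163) ∧
    (2^72 * 18^35 * 163 : ℤ) ≤ md 73 :=
  ⟨HadamardSeventyTwo.exists_matrix,
    le_csSup (HadamardSeventyTwo.finite_dets 73).bddAbove HadamardSeventyTwo.exists_matrix⟩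
end

section
/- There exists a 77×77 matrix with all entries equal to 1 or -1 whose determinant equals 2^76 · 19^37 · 177. Consequently md(77) ≥ 2^76 · 19^37 · 177. -/
/-- The rows of a Hadamard matrix of order 76 with excess 632; the bit `j` of an entry is set
when the corresponding matrix entry is `-1`. -/
def hrows : List ℕ := [
  442233576612952492338, 14836974240529397741637, 62617054664068321764693, 64020714645334945112203,
  47649881090891996550345, 66779557065055141774259, 55529545787957699908280, 5634517240966819360942,
  20234516404064689550466, 42719836765131510514468, 36197166275164425481320, 4621825332372618162928,
  59861222780612534431806, 25846721621707780393564, 30340330359528041677158, 75081875838965468436242,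
  60739784252047508292613, 50729188287517450214868, 30412450642276399042953, 36693217627176425345645,
  3786096797812520819750, 53296367829112313690883, 6876876591298685507438, 54709086282768437149351,
  42994066896610407282108, 1716143578007163236401, 14188563204825797135624, 12677025738101851435924,
  11661905915536844418266, 9808211630807005217661, 65403517103037666044753, 27216580292168370249912,
  8524200431587492447564, 57689852389333546641481, 62350228644247379960116, 64742046694239172035978,
  47417730420567240968234, 29126212140639423869189, 39038323690866952771997, 42251195779256419911201,
  34653774177832967484928, 2451582022702634987024, 53972789088355201761816, 68940251859693745148956,
  17062255233942944481505, 51389552175262573819232, 30091783259297691488160, 37780030715667287265984,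
  3843010442631129113487, 15486549538890496877783, 25743592388404399282308, 7496710597641937598802,
  57173485649199332873798, 24241109946025808256563, 8238925163951723272713, 19166318056083733784555,
  43242467914462638057189, 56288805294132759971975, 7259077996386878542163, 25020415720375651147193,
  15202351074219005281331, 74683625604700246657270, 28363076867399393062548, 48929456211761037877850,
  61839560428880712293314, 16824305445503700526862, 68488009449508221368680, 21875031051216447510107,
  4189034188017616208322, 39670462157716572137998, 31033106287199393939479, 21328718108682273524452,
  3114307895954912923549, 42224802146000029560097, 39007977183391604808831, 43200271931820540527824]

/-- Number of set bits among the lowest `k` bits. -/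
def bitcnt : ℕ → ℕ → ℕ
  | 0, _ => 0
  | k + 1, a => a % 2 + bitcnt k (a / 2)

/-- The sign encoded by bit `j` of `a`. -/
def bsgn (a j : ℕ) : ℤ := if a.testBit j then -1 else 1

lemma sum_bsgn (k : ℕ) : ∀ a : ℕ, ∑ j : Fin k, bsgn a j = (k : ℤ) - 2 * (bitcnt k a : ℤ) := by
  induction k with
  | zero => intro a; simp [bitcnt]
  | succ k ih =>
    intro a
    rw [Fin.sum_univ_succ]
    have h : ∀ j : Fin k, bsgn a (j.succ : Fin (k + 1)) = bsgn (a / 2) j := by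
      intro j
      simp [bsgn, Nat.testBit_succ]
    simp only [h, ih, bitcnt]
    have h2 : bsgn a ((0 : Fin (k + 1)) : ℕ) = 1 - 2 * ((a % 2 : ℕ) : ℤ) := by
      rcases Nat.mod_two_eq_zero_or_one a with h | h <;> simp [bsgn, Nat.testBit_zero, h]
    rw [h2]
    push_cast
    ring

lemma bsgn_mul (a b j : ℕ) : bsgn a j * bsgn b j = bsgn (a ^^^ b) j := by
  unfold bsgn
  rw [Nat.testBit_xor]
  cases a.testBit j <;> cases b.testBit j <;> simp

lemma hrows_length : hrows.length = 76 := by decide +kernel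

lemma hrows_pairwise : hrows.Pairwise (fun a b => bitcnt 76 (a ^^^ b) = 38) := by
  decide +kernel

lemma hrows_excess : (hrows.map (bitcnt 76)).sum = 2572 := by decide +kernel

/-- Row `i`. -/
def hrow (i : Fin 76) : ℕ := hrows[(i : ℕ)]'(by rw [hrows_length]; exact i.2)

/-- The Hadamard matrix. -/
def hmat : Matrix (Fin 76) (Fin 76) ℤ := fun i j => bsgn (hrow i) j

lemma bsgn_or (a j : ℕ) : bsgn a j = 1 ∨ bsgn a j = -1 := by
  unfold bsgn
  split_ifs <;> simp

lemma hrow_xor {i j : Fin 76} (h : i < j) : bitcnt 76 (hrow i ^^^ hrow j) = 38 :=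
  List.pairwise_iff_getElem.mp hrows_pairwise i j _ _ h

lemma hmat_mul : hmat * hmat.transpose = (76 : ℤ) • (1 : Matrix (Fin 76) (Fin 76) ℤ) := by
  ext i j
  rw [Matrix.mul_apply]
  simp only [Matrix.transpose_apply, hmat, bsgn_mul, sum_bsgn, Matrix.smul_apply, Matrix.one_apply]
  rcases lt_trichotomy i j with h | h | h
  · rw [hrow_xor h, if_neg h.ne]; norm_num
  · subst h
    have h0 : ∀ k, bitcnt k 0 = 0 := by
      intro k
      induction k with
      | zero => rfl
      | succ k ih => simp [bitcnt, ih]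
    simp [h0]
  · rw [Nat.xor_comm, hrow_xor h, if_neg h.ne']; norm_num

lemma hrow_sum : ∑ i : Fin 76, bitcnt 76 (hrow i) = 2572 := by
  have h : hrows.map (bitcnt 76) = List.ofFn (fun i : Fin 76 => bitcnt 76 (hrow i)) := by
    apply List.ext_getElem
    · simp [hrows_length]
    · intro i h1 h2
      rw [List.getElem_map, List.getElem_ofFn]
      rfl
  rw [← List.sum_ofFn, ← h, hrows_excess]

lemma hmat_sum : ∑ i : Fin 76, ∑ j : Fin 76, hmat i j = 632 := by
  simp only [hmat, sum_bsgn]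
  have h : ∑ i : Fin 76, (bitcnt 76 (hrow i) : ℤ) = 2572 := by
    rw [← Nat.cast_sum, hrow_sum]; rfl
  rw [Finset.sum_sub_distrib, ← Finset.mul_sum, h]
  simp

/-- The all ones column. -/
def onesCol : Matrix (Fin 76) (Fin 1) ℤ := fun _ _ => 1

/-- The bordered matrix. -/
def bmat : Matrix (Fin 76 ⊕ Fin 1) (Fin 76 ⊕ Fin 1) ℤ :=
  Matrix.fromBlocks hmat (-onesCol) onesCol.transpose 1

lemma bmat_mul : bmat * Matrix.fromBlocks hmat.transpose (hmat.transpose * onesCol) 0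
      ((76 : ℤ) • (1 : Matrix (Fin 1) (Fin 1) ℤ)) =
    Matrix.fromBlocks ((76 : ℤ) • (1 : Matrix (Fin 76) (Fin 76) ℤ)) 0
      (onesCol.transpose * hmat.transpose) ((708 : ℤ) • (1 : Matrix (Fin 1) (Fin 1) ℤ)) := by
  rw [bmat, Matrix.fromBlocks_multiply, Matrix.fromBlocks_inj]
  refine ⟨?_, ?_, ?_, ?_⟩
  · rw [hmat_mul]; simp
  · rw [← Matrix.mul_assoc, hmat_mul, Matrix.smul_mul, Matrix.mul_smul, Matrix.one_mul,
      Matrix.mul_one, smul_neg, add_neg_cancel]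
  · simp
  · ext i j
    have hij : i = j := Subsingleton.elim _ _
    subst hij
    rw [← Matrix.mul_assoc]
    simp only [Matrix.add_apply, Matrix.mul_apply, Matrix.transpose_apply, onesCol, mul_one, one_mul,
      hmat_sum]
    simp

lemma bmat_det : bmat.det = 2^76 * 19^37 * 177 ∨ bmat.det = -(2^76 * 19^37 * 177) := by
  have h := congrArg Matrix.det bmat_mul
  rw [Matrix.det_mul, Matrix.det_fromBlocks_zero₂₁, Matrix.det_fromBlocks_zero₁₂,
    Matrix.det_smul, Matrix.det_smul, Matrix.det_smul, Matrix.det_transpose] at h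
  have h2 := congrArg Matrix.det hmat_mul
  rw [Matrix.det_mul, Matrix.det_smul, Matrix.det_transpose] at h2
  simp only [Matrix.det_one, Fintype.card_fin, mul_one, pow_one] at h h2
  have h3 : hmat.det ^ 2 = (76 ^ 38) ^ 2 := by rw [sq, h2]; norm_num
  generalize hmat.det = d at h h3
  generalize bmat.det = e at h ⊢
  rcases sq_eq_sq_iff_eq_or_eq_neg.mp h3 with h4 | h4
  · left; subst h4; norm_num at h ⊢; linarith
  · right; subst h4; norm_num at h ⊢; linarith

lemma bmat_entries (i j) : bmat i j = 1 ∨ bmat i j = -1 := by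
  rcases i with i | i <;> rcases j with j | j
  · exact bsgn_or _ _
  · right; simp [bmat, onesCol]
  · left; simp [bmat, onesCol]
  · left
    have hij : i = j := Subsingleton.elim _ _
    simp [bmat, hij]

lemma exists_mat : ∃ M : Matrix (Fin 77) (Fin 77) ℤ,
      (∀ i j, M i j = 1 ∨ M i j = -1) ∧ M.det = 2^76 * 19^37 * 177 := by
  let e : Fin 76 ⊕ Fin 1 ≃ Fin 77 := finSumFinEquiv
  rcases bmat_det with h | h
  · refine ⟨Matrix.reindex e e bmat, fun i j => bmat_entries _ _, ?_⟩
    rw [Matrix.det_reindex_self, h]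
  · refine ⟨-Matrix.reindex e e bmat, fun i j => ?_, ?_⟩
    · rcases bmat_entries (e.symm i) (e.symm j) with h' | h' <;> simp [h']
    · rw [Matrix.det_neg, Matrix.det_reindex_self, h]
      have h77 : (-1 : ℤ) ^ 77 = -1 := by norm_num
      rw [Fintype.card_fin, h77]
      ring

theorem stmt_15 :
    (∃ M : Matrix (Fin 77) (Fin 77) ℤ,
      (∀ i j, M i j = 1 ∨ M i j = -1) ∧ M.det = 2^76 * 19^37 * 177) ∧
    (2^76 * 19^37 * 177 : ℤ) ≤ md 77 := by
  refine ⟨exists_mat, ?_⟩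
  unfold md
  apply le_csSup
  · refine ⟨(Nat.factorial 77 : ℤ), ?_⟩
    rintro d ⟨M, hM, rfl⟩
    have h := Matrix.det_le (A := M) (abv := AbsoluteValue.abs) (x := 1) (by
      intro i j
      rcases hM i j with h | h <;> simp [h])
    have h' : |M.det| ≤ (Nat.factorial 77 : ℤ) := by
      simpa only [one_pow, nsmul_eq_mul, mul_one, Fintype.card_fin, AbsoluteValue.abs_apply] using h
    exact (le_abs_self _).trans h'
  · exact exists_mat
end

section
/- There exists a 79×79 matrix with all entries equal to 1 or -1 whose determinant equals 2^78 · 4 · 19^30 · 23^9. Consequently md(79) ≥ 2^78 · 4 · 19^30 · 23^9. -/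
namespace MD79

/-- Bit masks of the sixteen `±1` sequences of length 19. -/
def mask : Fin 4 → Fin 4 → ℕ := ![![19167, 199411, 240803, 463729],![199411, 324877, 199411, 199411],![240803, 199411, 463729, 19167],![463729, 199411, 19167, 240803]]

/-- The sequences. -/
def x (a k : Fin 4) (u : Fin 19) : ℤ := if Nat.testBit (mask a k) u.val then 1 else -1

/-- Three columns of a Hadamard matrix of order 4. -/
def h : Fin 4 → Fin 3 → ℤ := ![![1, 1, 1], ![1, -1, -1], ![-1, 1, -1], ![-1, -1, 1]]

abbrev I := Fin 19 × Fin 4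

def R : Matrix I I ℤ := Matrix.of fun p q => x p.2 q.2 (p.1 - q.1)
def U : Matrix I (Fin 3) ℤ := Matrix.of fun p j => h p.2 j
def W : Matrix (Fin 3) (Fin 3) ℤ := Matrix.of fun _ _ => 1
def P : Matrix (I ⊕ Fin 3) (I ⊕ Fin 3) ℤ := Matrix.fromBlocks R U U.transpose 0
def M : Matrix (I ⊕ Fin 3) (I ⊕ Fin 3) ℤ := Matrix.fromBlocks R U U.transpose W
/-- `76 I + 4 K - J`. -/
def G : Matrix I I ℤ := Matrix.of fun p q =>
  (if p = q then 76 else 0) + (if p.1 = q.1 then 4 else 0) - 1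

set_option maxRecDepth 100000 in
lemma corr : ∀ a b : Fin 4, ∀ t : Fin 19, ∑ v : Fin 19, ∑ k : Fin 4, x a k (t + v) * x b k v
    + ∑ j, h a j * h b j
    = (if t = 0 ∧ a = b then 76 else 0) + (if t = 0 then 4 else 0) - 1 := by
  decide +kernel

lemma x_sum : ∀ a k : Fin 4, ∑ v : Fin 19, x a k v = 1 := by
  decide +kernel

lemma h_sum : ∀ j, ∑ k, h k j = 0 := by decide +kernel

lemma UtU : U.transpose * U = (76 : ℤ) • (1 : Matrix (Fin 3) (Fin 3) ℤ) := by
  ext i j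
  simp only [Matrix.mul_apply, Matrix.transpose_apply, U, Matrix.of_apply, Fintype.sum_prod_type]
  revert i j
  decide +kernel

lemma RRt : R * R.transpose + U * U.transpose = G := by
  ext ⟨s, a⟩ ⟨t, b⟩
  simp only [Matrix.add_apply, Matrix.mul_apply, Matrix.transpose_apply, U, R, G, Matrix.of_apply,
    Fintype.sum_prod_type]
  rw [← (Equiv.subLeft t).sum_comp]
  have := corr a b (s - t)
  simp only [sub_eq_zero] at this
  simp only [Equiv.subLeft_apply, Prod.mk.injEq]
  rw [← this]
  congr 1
  refine Finset.sum_congr rfl fun v _ => Finset.sum_congr rfl fun k _ => ?_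
  rw [show s - (t - v) = s - t + v by abel, show t - (t - v) = v by abel]

lemma RU : R * U = 0 := by
  ext ⟨s, a⟩ j
  simp only [Matrix.mul_apply, U, R, Matrix.of_apply, Fintype.sum_prod_type, Matrix.zero_apply]
  rw [← (Equiv.subLeft s).sum_comp, Finset.sum_comm]
  simp only [Equiv.subLeft_apply, sub_sub_cancel, ← Finset.sum_mul, x_sum, one_mul, h_sum]

lemma UtRt : U.transpose * R.transpose = 0 := by
  rw [← Matrix.transpose_mul, RU, Matrix.transpose_zero]

lemma detG : G.det = 76 ^ 57 * 92 ^ 18 * 16 := by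
  let B : Matrix (Fin 4) (Fin 4) ℤ := Matrix.of fun a b => (if a = b then 76 else 0) + 4
  let A : Matrix I I ℤ := Matrix.kroneckerMap (· * ·) (1 : Matrix (Fin 19) (Fin 19) ℤ) B
  have hB : B.det = 76 ^ 3 * 92 := by
    simp only [B]
    decide +kernel
  have hA : A.det = (76 ^ 3 * 92) ^ 19 := by
    have := Matrix.det_kronecker (1 : Matrix (Fin 19) (Fin 19) ℤ) B
    simp only [Matrix.det_one, one_pow, one_mul, Fintype.card_fin, hB] at this
    exact this
  let C : Matrix I I ℤ := Matrix.of fun p q => (if p = q then 92 else 0) - 1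
  have hAC : A * C = (92 : ℤ) • G := by
    ext ⟨s, a⟩ ⟨t, b⟩
    simp only [A, B, C, G, Matrix.mul_apply, Matrix.kroneckerMap_apply, Matrix.of_apply,
      Fintype.sum_prod_type, Matrix.smul_apply, Matrix.one_apply, Prod.mk.injEq, smul_eq_mul,
      ite_mul, one_mul, zero_mul, Finset.sum_ite_irrel, Finset.sum_const_zero, Finset.sum_ite_eq,
      Finset.mem_univ, if_true]
    by_cases hst : s = t
    · simp only [hst, true_and, if_true]
      fin_cases a <;> fin_cases b <;> simp [Fin.sum_univ_four]
    · simp only [hst, false_and, if_false]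
      fin_cases a <;> fin_cases b <;> simp [Fin.sum_univ_four]
  have hC : C.det = 92 ^ 75 * 16 := by
    have hQ : (C.map (Int.castRingHom ℚ)).det = 92 ^ 75 * 16 := by
      have e : C.map (Int.castRingHom ℚ) = (92 : ℚ) • (1 - Matrix.replicateCol Unit (fun _ : I => (1/92 : ℚ)) *
          Matrix.replicateRow Unit (fun _ : I => (1 : ℚ))) := by
        ext p q
        simp [C, Matrix.one_apply, Matrix.mul_apply]
        split_ifs <;> norm_num
      rw [e, Matrix.det_smul, Matrix.det_one_sub_mul_comm]
      simp [Matrix.mul_apply]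
      norm_num
    have := RingHom.map_det (Int.castRingHom ℚ) C
    rw [RingHom.mapMatrix_apply, hQ] at this
    have h2 : ((C.det : ℤ) : ℚ) = 92 ^ 75 * 16 := this
    exact Int.cast_injective (α := ℚ) (h2.trans (by norm_num))
  have := congrArg Matrix.det hAC
  rw [Matrix.det_mul, hA, hC, Matrix.det_smul] at this
  simp only [I, Fintype.card_prod, Fintype.card_fin] at this
  refine mul_left_cancel₀ (a := (92 : ℤ) ^ (19 * 4)) (by norm_num) ?_
  rw [← this]
  norm_num

lemma MP : M.det * P.det = (2^78 * 4 * 19^30 * 23^9) ^ 2 := by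
  rw [← Matrix.det_transpose P, ← Matrix.det_mul, M, P, Matrix.fromBlocks_transpose,
    Matrix.fromBlocks_multiply]
  simp only [Matrix.transpose_transpose, Matrix.transpose_zero, Matrix.mul_zero, add_zero, RRt,
    RU, UtU, Matrix.det_fromBlocks_zero₁₂, detG, Matrix.det_smul, Matrix.det_one]
  norm_num

lemma PP : P.det * P.det = (2^78 * 4 * 19^30 * 23^9) ^ 2 := by
  conv_lhs => arg 2; rw [← Matrix.det_transpose P]
  rw [← Matrix.det_mul, P, Matrix.fromBlocks_transpose,
    Matrix.fromBlocks_multiply]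
  simp only [Matrix.transpose_transpose, Matrix.transpose_zero, Matrix.mul_zero, add_zero, RRt,
    RU, UtU, Matrix.det_fromBlocks_zero₁₂, detG, Matrix.det_smul, Matrix.det_one]
  norm_num

lemma Mdet : M.det = 2^78 * 4 * 19^30 * 23^9 ∨ M.det = -(2^78 * 4 * 19^30 * 23^9) := by
  have hP : P.det ≠ 0 := by
    intro h0
    have := PP
    rw [h0] at this
    norm_num at this
  have : M.det = P.det := mul_right_cancel₀ hP (MP.trans PP.symm)
  rw [this]
  exact sq_eq_sq_iff_eq_or_eq_neg.mp (by rw [sq]; exact PP)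

lemma x_pm (a k : Fin 4) (u : Fin 19) : x a k u = 1 ∨ x a k u = -1 := by
  unfold x; split_ifs <;> simp

lemma h_pm : ∀ a j, h a j = 1 ∨ h a j = -1 := by decide +kernel

lemma M_pm (p q) : M p q = 1 ∨ M p q = -1 := by
  rcases p with p | p <;> rcases q with q | q
  · exact x_pm _ _ _
  · exact h_pm _ _
  · exact h_pm _ _
  · exact Or.inl rfl

lemma exists_matrix : ∃ M : Matrix (Fin 79) (Fin 79) ℤ,
      (∀ i j, M i j = 1 ∨ M i j = -1) ∧ M.det = 2^78 * 4 * 19^30 * 23^9 := by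
  let e : Fin 79 ≃ I ⊕ Fin 3 := (Fintype.equivFinOfCardEq (by simp)).symm
  let N : Matrix (Fin 79) (Fin 79) ℤ := M.submatrix e e
  have hN : N.det = M.det := Matrix.det_submatrix_equiv_self e M
  have hpm : ∀ i j, N i j = 1 ∨ N i j = -1 := fun i j => M_pm _ _
  rcases Mdet with hd | hd
  · exact ⟨N, hpm, hN.trans hd⟩
  · refine ⟨-N, fun i j => ?_, ?_⟩
    · rcases hpm i j with h | h <;> simp [h]
    · rw [Matrix.det_neg, hN, hd, Fintype.card_fin]
      norm_num

end MD79

theorem stmt_16 :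
    (∃ M : Matrix (Fin 79) (Fin 79) ℤ,
      (∀ i j, M i j = 1 ∨ M i j = -1) ∧ M.det = 2^78 * 4 * 19^30 * 23^9) ∧
    (2^78 * 4 * 19^30 * 23^9 : ℤ) ≤ md 79 := by
  refine ⟨MD79.exists_matrix, le_csSup ?_ MD79.exists_matrix⟩
  refine ⟨(Nat.factorial 79 : ℤ) * 1 ^ 79, ?_⟩
  rintro d ⟨M, hM, rfl⟩
  have := Matrix.det_le (A := M) (abv := AbsoluteValue.abs) (x := 1) (fun i j => by
    rcases hM i j with h | h <;> simp [h])
  simp only [Fintype.card_fin, nsmul_eq_mul, AbsoluteValue.abs_apply] at this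
  exact (le_abs_self _).trans this
end

section
/- There exists a 95×95 matrix with all entries equal to 1 or -1 whose determinant equals 2^96 · 23^36 · 27^11. Consequently md(95) ≥ 2^96 · 23^36 · 27^11. -/
namespace Det95

open Matrix

/-- Paley type skew matrix of order 23. -/
def q (i j : Fin 23) : ℤ :=
  if i = j then 0
  else if ((i.val + 23 - j.val) ^ 11) % 23 = 1 then 1 else -1

/-- Border block. -/
def b : Matrix (Fin 4) (Fin 3) ℤ :=
  !![-1, -1, 1; -1, 1, -1; 1, -1, -1; 1, 1, 1]

/-- Row sums of `b`. -/
def v : Fin 4 → ℤ := ![-1, -1, -1, 3]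

/-- Sign block. -/
def f (i j : Fin 4) : ℤ := if i = j then -1 else 1

abbrev P := (Fin 4 × Fin 23) ⊕ Fin 3

/-- The matrix of order 95. -/
def A : Matrix P P ℤ :=
  fromBlocks
    (of fun x y => (if x.2 = y.2 then 1 else 0) + f x.1 y.1 * q x.2 y.2)
    (of fun x s => b x.1 s)
    (of fun s x => b x.1 s)
    (of fun _ _ => 1)

def U : Matrix P (Fin 23 ⊕ Fin 2) ℤ :=
  fromBlocks
    (of fun x l => if x.2 = l then 1 else 0)
    (of fun x s => if s = 0 then v x.1 else 0)
    0
    (of fun _ s => if s = 1 then 1 else 0)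

def V : Matrix (Fin 23 ⊕ Fin 2) P ℤ :=
  fromBlocks
    (of fun l x => 4 * (if l = x.2 then 1 else 0) - 1)
    0
    (of fun s x => if s = 1 then v x.1 else 0)
    (of fun s _ => if s = 0 then 1 else 3)

lemma q_gram : ∀ i j : Fin 23, ∑ k, q i k * q j k = (if i = j then 23 else 0) - 1 := by
  decide +kernel

lemma q_skew : ∀ i j : Fin 23, q i j + q j i = 0 := by
  decide +kernel

lemma q_row : ∀ i : Fin 23, ∑ k, q i k = 0 := by
  decide +kernel

lemma q_pm : ∀ i j : Fin 23,
    ∀ e : Fin 2, ((if i = j then (1 : ℤ) else 0) + (if e = 0 then -1 else 1) * q i j = 1) ∨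
      ((if i = j then (1 : ℤ) else 0) + (if e = 0 then -1 else 1) * q i j = -1) := by
  decide +kernel

lemma b_pm : ∀ (i : Fin 4) (s : Fin 3), b i s = 1 ∨ b i s = -1 := by
  intro i s
  fin_cases i <;> fin_cases s <;> simp [b]

lemma A_pm (i j : P) : A i j = 1 ∨ A i j = -1 := by
  rcases i with ⟨a, k⟩ | s <;> rcases j with ⟨c, l⟩ | t
  · simp only [A, fromBlocks_apply₁₁, of_apply, f]
    by_cases h : a = c
    · simpa [h] using q_pm k l 0
    · simpa [h] using q_pm k l 1
  · exact b_pm _ _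
  · exact b_pm _ _
  · left; rfl

lemma block_sum (x y : ℤ) (i j : Fin 23) :
    ∑ k, (((if i = k then 1 else 0) + x * q i k) * ((if j = k then 1 else 0) + y * q j k))
      = (if i = j then 1 else 0) + y * q j i + x * q i j
        + x * y * ((if i = j then 23 else 0) - 1) := by
  rw [← q_gram i j, Finset.mul_sum]
  have : ∀ k, (((if i = k then 1 else 0) + x * q i k) * ((if j = k then 1 else 0) + y * q j k))
      = (if i = k then (if j = k then 1 else 0) else 0) + (if i = k then y * q j k else 0)
        + (if j = k then x * q i k else 0) + x * y * (q i k * q j k) := by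
    intro k
    split_ifs <;> ring
  simp only [this, Finset.sum_add_distrib, Finset.sum_ite_eq, Finset.mem_univ, if_true]
  simp [eq_comm]

lemma border_sum (x z : ℤ) (i : Fin 23) :
    ∑ k, (((if i = k then 1 else 0) + x * q i k) * z) = z := by
  rw [← Finset.sum_mul, Finset.sum_add_distrib, ← Finset.mul_sum, q_row]
  simp

lemma gram : A * Aᵀ = (92 : ℤ) • (1 : Matrix P P ℤ) + U * V := by
  ext x y
  rcases x with ⟨a, k⟩ | s <;> rcases y with ⟨c, l⟩ | t
  · simp only [mul_apply, A, U, V, transpose_apply, Fintype.sum_sum_type, Fintype.sum_prod_type,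
      fromBlocks_apply₁₁, fromBlocks_apply₁₂, fromBlocks_apply₂₁, fromBlocks_apply₂₂, of_apply,
      block_sum, Matrix.add_apply, Matrix.smul_apply, one_apply, Sum.inl.injEq, Prod.mk.injEq]
    have hq : q l k = - q k l := by linarith [q_skew k l]
    rw [hq]
    fin_cases a <;> fin_cases c <;>
      simp [Fin.sum_univ_four, Fin.sum_univ_three, Fin.sum_univ_two, f, b, v] <;>
      split_ifs <;> ring
  · simp only [mul_apply, A, U, V, transpose_apply, Fintype.sum_sum_type, Fintype.sum_prod_type,
      fromBlocks_apply₁₁, fromBlocks_apply₁₂, fromBlocks_apply₂₁, fromBlocks_apply₂₂, of_apply,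
      border_sum, Matrix.add_apply, Matrix.smul_apply, one_apply]
    fin_cases a <;> fin_cases t <;>
      simp [Fin.sum_univ_four, Fin.sum_univ_three, Fin.sum_univ_two, b, v]
  · simp only [mul_apply, A, U, V, transpose_apply, Fintype.sum_sum_type, Fintype.sum_prod_type,
      fromBlocks_apply₁₁, fromBlocks_apply₁₂, fromBlocks_apply₂₁, fromBlocks_apply₂₂, of_apply,
      mul_comm (b _ s), border_sum, Matrix.add_apply, Matrix.smul_apply, one_apply]
    fin_cases c <;> fin_cases s <;>
      simp [Fin.sum_univ_four, Fin.sum_univ_three, Fin.sum_univ_two, b, v]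
  · simp only [mul_apply, A, U, V, transpose_apply, Fintype.sum_sum_type, Fintype.sum_prod_type,
      fromBlocks_apply₁₁, fromBlocks_apply₁₂, fromBlocks_apply₂₁, fromBlocks_apply₂₂, of_apply,
      Matrix.add_apply, Matrix.smul_apply, one_apply]
    fin_cases s <;> fin_cases t <;>
      simp [Fin.sum_univ_four, Fin.sum_univ_three, Fin.sum_univ_two, b]

lemma det_swap {m n : Type*} [Fintype m] [Fintype n] [DecidableEq m] [DecidableEq n]
    (c : ℤ) (X : Matrix m n ℤ) (Y : Matrix n m ℤ) :
    c ^ Fintype.card n * (c • (1 : Matrix m m ℤ) + X * Y).det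
      = c ^ Fintype.card m * (c • (1 : Matrix n n ℤ) + Y * X).det := by
  have h := congrArg (Polynomial.eval c) (Matrix.charpoly_mul_comm' (-X) Y)
  simpa [Matrix.eval_charpoly, Polynomial.eval_mul, ← Matrix.smul_one_eq_diagonal,
    Matrix.scalar_apply] using h

lemma small : (92 : ℤ) • (1 : Matrix (Fin 23 ⊕ Fin 2) (Fin 23 ⊕ Fin 2) ℤ) + V * U
    = fromBlocks ((108 : ℤ) • (1 : Matrix (Fin 23) (Fin 23) ℤ)
        + (of fun _ _ => -4 : Matrix (Fin 23) (Fin 1) ℤ) *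
          (of fun _ _ => 1 : Matrix (Fin 1) (Fin 23) ℤ)) 0 0 !![92, 3; 276, 101] := by
  ext x y
  rcases x with k | s <;> rcases y with l | t <;>
    rw [Matrix.add_apply, Matrix.smul_apply]
  · rw [fromBlocks_apply₁₁, Matrix.add_apply, Matrix.smul_apply]
    simp [mul_apply, U, V, Fintype.sum_prod_type, one_apply]
    split_ifs <;> ring
  · simp [mul_apply, U, V, Fintype.sum_prod_type, one_apply, Fin.sum_univ_four, v]
    fin_cases t <;> simp [sub_mul]
  · fin_cases s <;>
    simp [mul_apply, U, V, Fintype.sum_prod_type, one_apply, Fin.sum_univ_four, v]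
  · fin_cases s <;> fin_cases t <;>
    simp [mul_apply, U, V, Fintype.sum_prod_type, one_apply, Fin.sum_univ_four, v]

lemma det_core : ((108 : ℤ) • (1 : Matrix (Fin 23) (Fin 23) ℤ)
        + (of fun _ _ => -4 : Matrix (Fin 23) (Fin 1) ℤ) *
          (of fun _ _ => 1 : Matrix (Fin 1) (Fin 23) ℤ)).det = 108 ^ 22 * 16 := by
  have h := det_swap (108 : ℤ) (of fun _ _ => -4 : Matrix (Fin 23) (Fin 1) ℤ)
    (of fun _ _ => 1 : Matrix (Fin 1) (Fin 23) ℤ)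
  have h2 : ((108 : ℤ) • (1 : Matrix (Fin 1) (Fin 1) ℤ)
        + (of fun _ _ => 1 : Matrix (Fin 1) (Fin 23) ℤ) *
          (of fun _ _ => -4 : Matrix (Fin 23) (Fin 1) ℤ)).det = 16 := by
    rw [det_unique, Matrix.add_apply, Matrix.smul_apply]
    simp [mul_apply]
  rw [h2] at h
  simp only [Fintype.card_fin] at h
  linarith

lemma det_sq : A.det ^ 2 = (2 ^ 96 * 23 ^ 36 * 27 ^ 11) ^ 2 := by
  have h := det_swap (92 : ℤ) U V
  rw [← gram, small, det_fromBlocks_zero₂₁, det_core, det_fin_two_of, det_mul,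
    det_transpose] at h
  simp only [Fintype.card_sum, Fintype.card_prod, Fintype.card_fin] at h
  norm_num at h ⊢
  linarith

lemma exists_mat : ∃ M : Matrix (Fin 95) (Fin 95) ℤ,
    (∀ i j, M i j = 1 ∨ M i j = -1) ∧ M.det = 2^96 * 23^36 * 27^11 := by
  have hc : Fintype.card P = 95 := by simp
  let e : P ≃ Fin 95 := Fintype.equivFinOfCardEq hc
  rcases sq_eq_sq_iff_eq_or_eq_neg.mp det_sq with h | h
  · refine ⟨reindex e e A, fun i j => A_pm _ _, ?_⟩
    rw [det_reindex_self, h]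
  · refine ⟨reindex e e (-A), fun i j => ?_, ?_⟩
    · rcases A_pm (e.symm i) (e.symm j) with h | h <;> simp [h]
    · rw [det_reindex_self, det_neg, h, hc]
      norm_num

lemma bdd : BddAbove {d : ℤ | ∃ M : Matrix (Fin 95) (Fin 95) ℤ,
    (∀ i j, M i j = 1 ∨ M i j = -1) ∧ M.det = d} := by
  apply Set.Finite.bddAbove
  have hf : (Set.pi Set.univ fun _ : Fin 95 => Set.pi Set.univ fun _ : Fin 95 =>
      ({1, -1} : Set ℤ)).Finite :=
    Set.Finite.pi fun _ => Set.Finite.pi fun _ => Set.toFinite _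
  refine (hf.image fun M => Matrix.det (Matrix.of M)).subset ?_
  rintro d ⟨M, hM, rfl⟩
  exact ⟨M, fun i _ j _ => hM i j, rfl⟩

end Det95

theorem stmt_18 :
    (∃ M : Matrix (Fin 95) (Fin 95) ℤ,
      (∀ i j, M i j = 1 ∨ M i j = -1) ∧ M.det = 2^96 * 23^36 * 27^11) ∧
    (2^96 * 23^36 * 27^11 : ℤ) ≤ md 95 :=
  ⟨Det95.exists_mat, le_csSup Det95.bdd Det95.exists_mat⟩
end
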